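/- arXiv:1302.3024 — 2 statements merged into one kernel-verified Lean document; each statement's English description precedes it below -/
import Mathlib

section
/- There exists a quasiperiodically forced increasing interval map f : T¹ × I → T¹ × I and a minimal set M of f such that M is almost automorphic but M is not filled-in, i.e. M is a proper subset of the set [φ⁻_M, φ⁺_M] = {(θ,x) : φ⁻_M(θ) ≤ x ≤ φ⁺_M(θ)}, where φ⁻_M(θ) = inf M_θ and φ⁺_M(θ) = sup M_θ. -/
open Set Function MeasureTheory

noncomputable section

/-- The circle `T¹ = ℝ/ℤ`. -/
abbrev T1 := AddCircle (1 : ℝ)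

/-- The `n`-th iterate (`n ∈ ℤ`) of a bijection. -/
def zIter {X : Type*} (g : Equiv.Perm X) (n : ℤ) : X → X := fun x => (g ^ n) x

/-- A set of integers is syndetic if it has bounded gaps. -/
def ZSyndetic (S : Set ℤ) : Prop := ∃ N : ℕ, ∀ n : ℤ, ∃ k ∈ S, |k - n| ≤ (N : ℤ)

/-- A homeomorphism `α` of a metric space is almost periodic if for every `ε > 0` the set
`{n ∈ ℤ | dist(αⁿ, Id) < ε}` is syndetic. -/
def AlmostPeriodicHomeo {Θ : Type*} [MetricSpace Θ] (α : Θ ≃ₜ Θ) : Prop :=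
  ∀ ε > (0 : ℝ), ZSyndetic {n : ℤ | ∀ θ : Θ, dist (zIter α.toEquiv n θ) θ < ε}

/-- A homeomorphism is minimal if every (two-sided) orbit is dense. -/
def MinimalHomeo {Θ : Type*} [TopologicalSpace Θ] (α : Θ ≃ₜ Θ) : Prop :=
  ∀ θ : Θ, Dense (range fun n : ℤ => zIter α.toEquiv n θ)

/-- A self-map `g` of a metric space is almost periodic if its family of iterates
is (uniformly) equicontinuous. -/
def AlmostPeriodicMap {Y : Type*} [MetricSpace Y] (g : Y → Y) : Prop :=
  ∀ ε > (0 : ℝ), ∃ δ > (0 : ℝ), ∀ y y' : Y, dist y y' < δ → ∀ n : ℕ, dist (g^[n] y) (g^[n] y') < ε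

/-- `h` is a factor map (semiconjugacy) from `(X, f)` onto `(Y, g)`:
a continuous surjection with `h ∘ f = g ∘ h`.  Then `(X, f)` is a topological
extension of `(Y, g)`. -/
def IsFactorMap {X Y : Type*} [TopologicalSpace X] [TopologicalSpace Y]
    (f : X → X) (g : Y → Y) (h : X → Y) : Prop :=
  Continuous h ∧ Surjective h ∧ h ∘ f = g ∘ h

/-- A map `h` is almost 1-1 if the set of points of the target having exactly one
preimage is dense. -/
def AlmostOneOne {X Y : Type*} [TopologicalSpace Y] (h : X → Y) : Prop :=
  Dense {y : Y | ∃! x, h x = y}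

/-- A witness that the system `(X, f)` is almost automorphic: an almost periodic
homeomorphism of a compact metric space which is an almost 1-1 factor of `(X, f)`. -/
structure AAWitness {X : Type*} [TopologicalSpace X] (f : X → X) where
  (Y : Type)
  [mY : MetricSpace Y]
  [cY : CompactSpace Y]
  (g : Y ≃ₜ Y)
  (hmap : X → Y)
  (factor : IsFactorMap f (⇑g) hmap)
  (a11 : AlmostOneOne hmap)
  (ap : ∀ ε > (0 : ℝ), ∃ δ > (0 : ℝ), ∀ y y' : Y, dist y y' < δ →
        ∀ n : ℤ, dist (zIter g.toEquiv n y) (zIter g.toEquiv n y') < ε)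

/-- `M` is a minimal set of `f`: nonempty, closed, invariant, and without proper
nonempty closed invariant subsets. -/
def IsMinimalSet {X : Type*} [TopologicalSpace X] (f : X → X) (M : Set X) : Prop :=
  M.Nonempty ∧ IsClosed M ∧ f '' M = M ∧
    ∀ M' ⊆ M, M'.Nonempty → IsClosed M' → f '' M' ⊆ M' → M' = M

/-- The restriction of `f` to an invariant set. -/
def restrictMap {X : Type*} {f : X → X} {M : Set X} (hM : Set.MapsTo f M M) : ↥M → ↥M :=
  Set.MapsTo.restrict f M M hM

/-- `M` is an almost automorphic minimal set of `f`: `f` restricted to `M` admits an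
almost periodic almost 1-1 factor. -/
def IsAAMinimal {X : Type*} [MetricSpace X] (f : X → X) (M : Set X) : Prop :=
  IsMinimalSet f M ∧ ∀ hM : Set.MapsTo f M M, Nonempty (AAWitness (restrictMap hM))

/-- `M` is an almost periodic minimal set of `f`: the family of iterates of the
restriction of `f` to `M` is equicontinuous. -/
def IsAPMinimal {X : Type*} [MetricSpace X] (f : X → X) (M : Set X) : Prop :=
  IsMinimalSet f M ∧ ∀ hM : Set.MapsTo f M M, AlmostPeriodicMap (restrictMap hM)

/-- A subset of a product is pinched if some fibre is a singleton. -/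
def Pinched {Θ X : Type*} (A : Set (Θ × X)) : Prop := ∃ θ : Θ, ∃! x : X, (θ, x) ∈ A

/-- An `α`-forced increasing interval map on `Θ × I`: a continuous skew product over `α`
whose fibre maps are strictly increasing. -/
def ForcedIncreasing {Θ : Type*} [TopologicalSpace Θ] {I : Set ℝ} (α : Θ → Θ)
    (f : Θ × ↥I → Θ × ↥I) : Prop :=
  Continuous f ∧ (∀ p : Θ × ↥I, (f p).1 = α p.1) ∧
    ∀ θ : Θ, StrictMono fun x : ↥I => (f (θ, x)).2

/-- The fibre of `M ⊆ Θ × I` over `θ`, as a set of reals. -/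
def fiberSet {Θ : Type*} {I : Set ℝ} (M : Set (Θ × ↥I)) (θ : Θ) : Set ℝ :=
  (fun x : ↥I => (x : ℝ)) '' {x : ↥I | (θ, x) ∈ M}

/-- The filled-in envelope `[φ⁻_M, φ⁺_M]` of `M`, where `φ⁻_M(θ) = inf M_θ` and
`φ⁺_M(θ) = sup M_θ`. -/
def FilledEnvelope {Θ : Type*} {I : Set ℝ} (M : Set (Θ × ↥I)) : Set (Θ × ↥I) :=
  {p : Θ × ↥I | sInf (fiberSet M p.1) ≤ (p.2 : ℝ) ∧ (p.2 : ℝ) ≤ sSup (fiberSet M p.1)}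

/-- The graph of a curve `γ : Θ → I`. -/
def curveGraph {Θ : Type*} {I : Set ℝ} (γ : Θ → ↥I) : Set (Θ × ↥I) :=
  {p : Θ × ↥I | p.2 = γ p.1}

/-- The conclusion of the blow-up construction (properties (i)-(v) of the main theorem):
`f̂` is a topological extension of `f` via the fibre-respecting factor map `h`, `f̂` is an
`α`-forced increasing interval map, the fibre maps of `h` are non-decreasing, `h` is
injective off `h⁻¹(Γ)`, countably many points of `Γ` have non-degenerate vertical-segment
preimages while all other points of `Γ` have singleton preimages, and `h⁻¹(Γ)` contains
the graph of no continuous curve. -/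
def BlowUpConclusion {Θ : Type*} [TopologicalSpace Θ] {I : Set ℝ}
    (α : Θ → Θ) (f : Θ × ↥I → Θ × ↥I) (γ : Θ → ↥I)
    (fhat : Θ × ↥I → Θ × ↥I) (h : Θ × ↥I → Θ × ↥I) : Prop :=
  IsFactorMap fhat f h ∧ (∀ p : Θ × ↥I, (h p).1 = p.1) ∧
  ForcedIncreasing α fhat ∧
  (∀ θ : Θ, Monotone fun x : ↥I => (h (θ, x)).2) ∧
  Set.InjOn h (h ⁻¹' curveGraph γ)ᶜ ∧
  (∃ C : Set (Θ × ↥I), C ⊆ curveGraph γ ∧ C.Countable ∧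
    (∀ p ∈ C, ∃ x₁ x₂ : ↥I, x₁ < x₂ ∧ h ⁻¹' {p} = {p.1} ×ˢ Set.Icc x₁ x₂) ∧
    (∀ p ∈ curveGraph γ \ C, ∃ x : ↥I, h ⁻¹' {p} = {(p.1, x)})) ∧
  (∀ η : Θ → ↥I, Continuous η → ¬ (curveGraph η ⊆ h ⁻¹' curveGraph γ))

/-!
Blow up one orbit of the circle rotation, guided by a curve `T¹ → [0, 1]` whose only discontinuity
is at `0`. Over `θ` put the points `(y, p)`, with `y ∈ [0, 1]` a level and `p : ℤ → [0, 1]`, such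
that `p n` is the value at `y` of a ramp through `(1/2, curve (θ + n ρ))` whose slope tends to
infinity as `θ + n ρ` tends to `0`. Over the orbit of `0` one ramp degenerates to a step with a
vertical segment. Ramps being monotone, each fibre is a chain in the cube `[0, 1] × [0, 1]^ℤ`, so
one strictly increasing function of the cube straightens the blow-up to `T¹ × I`, and the shift
`(θ, y, p) ↦ (θ + ρ, y, p (· + 1))`, which preserves the product order, becomes a forced increasing
map.

At the level `1/2` the heights over a point off the orbit of `0` are the values of the curve along
its orbit. The closure of this graph is minimal and almost 1-1 over the rotation, and over `0` the
heights `p 0` that occur are the cluster values of the curve at `0`. For the sawtooth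
`curve : T¹ → [0, 1)` these are `0` and `1`, so the point with `p 0 = 1/2` lies in the filled-in
envelope but not in the minimal set.
-/

section Dynamics

variable {X Y : Type*} [TopologicalSpace X] [TopologicalSpace Y]

lemma image_eq_univ_of_denseRange_iterate [CompactSpace X] [T2Space Y] {f : X → X} {g : Y → Y}
    {π : X → Y} (hπ : Continuous π) (hfg : Semiconj π f g)
    (hg : ∀ y, DenseRange fun n : ℕ => g^[n] y) {F : Set X} (hne : F.Nonempty)
    (hcl : IsClosed F) (hF : MapsTo f F F) : π '' F = univ := by
  obtain ⟨x, hx⟩ := hne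
  have hclosed : IsClosed (π '' F) := (hcl.isCompact.image hπ).isClosed
  have hdense : Dense (π '' F) := (hg (π x)).mono <| range_subset_iff.2 fun n =>
    ⟨f^[n] x, hF.iterate n hx, hfg.iterate_right n x⟩
  rw [← hclosed.closure_eq, hdense.closure_eq]

lemma isMinimalSet_closure_of_injective_fibers [CompactSpace X] [T2Space Y] {f : X → X}
    {g : Y → Y} {π : X → Y} (hπ : Continuous π) (hfg : Semiconj π f g)
    (hg : ∀ y, DenseRange fun n : ℕ => g^[n] y) {R : Set X} (hne : R.Nonempty)
    (hR : f '' closure R = closure R)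
    (hinj : ∀ x ∈ closure R, ∀ x' ∈ R, π x = π x' → x = x') :
    IsMinimalSet f (closure R) := by
  refine ⟨hne.closure, isClosed_closure, hR, fun F hFR hF hcl hfF =>
    hFR.antisymm (closure_minimal (fun x hx => ?_) hcl)⟩
  have huniv := image_eq_univ_of_denseRange_iterate hπ hfg hg hF hcl (mapsTo_iff_image_subset.2 hfF)
  obtain ⟨x', hx', hxx'⟩ := huniv.symm ▸ mem_univ (π x)
  exact hinj x' (hFR hx') x hx hxx' ▸ hx'

lemma IsMinimalSet.image_homeomorph {f : X → X} {M : Set X} (hM : IsMinimalSet f M)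
    (Ψ : X ≃ₜ Y) : IsMinimalSet (Ψ ∘ f ∘ Ψ.symm) (Ψ '' M) := by
  obtain ⟨hne, hcl, hinv, hmin⟩ := hM
  have himage (S : Set X) : (Ψ ∘ f ∘ Ψ.symm) '' (Ψ '' S) = Ψ '' (f '' S) := by
    simp only [image_image, comp_apply, Homeomorph.symm_apply_apply]
  refine ⟨hne.image Ψ, Ψ.isClosed_image.2 hcl, by rw [himage, hinv], fun F hFM hF hFcl hfF => ?_⟩
  obtain ⟨S, rfl⟩ := Ψ.surjective.image_surjective F
  rw [himage] at hfF
  rw [hmin S ((image_subset_image_iff Ψ.injective).1 hFM) hF.of_image (Ψ.isClosed_image.1 hFcl)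
    ((image_subset_image_iff Ψ.injective).1 hfF)]

theorem IsMinimalSet.isAAMinimal_of_semiconj {X : Type*} [MetricSpace X] [CompactSpace X]
    {Y : Type} [MetricSpace Y] [CompactSpace Y] {f : X → X} {M : Set X} (hM : IsMinimalSet f M)
    {g : Y ≃ₜ Y} {π : X → Y} (hπ : Continuous π) (hfg : Semiconj π f g)
    (hg : ∀ y, DenseRange fun n : ℕ => g^[n] y)
    (hequi : UniformEquicontinuous fun n : ℤ => zIter g.toEquiv n)
    (hdense : Dense {y | (M ∩ π ⁻¹' {y}).Subsingleton}) : IsAAMinimal f M := by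
  refine ⟨hM, fun hMf => ⟨?_⟩⟩
  have hsurj : Surjective fun x : M => π x := fun y => by
    have huniv := image_eq_univ_of_denseRange_iterate hπ hfg hg hM.1 hM.2.1 hMf
    obtain ⟨x, hx, hxy⟩ := huniv.symm ▸ mem_univ y
    exact ⟨⟨x, hx⟩, hxy⟩
  exact
    { Y := Y
      g := g
      hmap := fun x => π x
      factor := ⟨hπ.comp continuous_subtype_val, hsurj, funext fun x => hfg x⟩
      a11 := hdense.mono fun y hy => by
        obtain ⟨x, hx⟩ := hsurj y
        exact ⟨x, hx, fun x' hx' => Subtype.ext (hy ⟨x'.2, hx'⟩ ⟨x.2, hx⟩)⟩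
      ap := Metric.uniformEquicontinuous_iff.1 hequi }

lemma zIter_toEquiv (α : X ≃ₜ X) (n : ℤ) : zIter α.toEquiv n = ⇑(α ^ n) := by
  let toPerm : (X ≃ₜ X) →* Equiv.Perm X := ⟨⟨Homeomorph.toEquiv, rfl⟩, fun _ _ => rfl⟩
  exact congrArg DFunLike.coe (map_zpow toPerm α n).symm

end Dynamics

lemma mem_filledEnvelope {Θ : Type*} {I : Set ℝ} (hI : Bornology.IsBounded I)
    {M : Set (Θ × I)} {θ : Θ} {x x₀ x₁ : I} (h₀ : (θ, x₀) ∈ M) (h₁ : (θ, x₁) ∈ M)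
    (hx : x ∈ Icc x₀ x₁) : (θ, x) ∈ FilledEnvelope M := by
  have hsub : fiberSet M θ ⊆ I := by
    rintro _ ⟨z, -, rfl⟩
    exact z.2
  exact ⟨(csInf_le (hI.bddBelow.mono hsub) ⟨x₀, h₀, rfl⟩).trans hx.1,
    le_trans hx.2 (le_csSup (hI.bddAbove.mono hsub) ⟨x₁, h₁, rfl⟩)⟩

section WeightedSum

variable {ι : Type*} {c : ι → ℝ}

/-- The sum `∑ᵢ cᵢ pᵢ` of the coordinates of a point of the cube `[0, 1]^ι`, weighted by `c`; it
linearizes the product order. -/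
def weightedSum (c : ι → ℝ) (p : ι → unitInterval) : ℝ := ∑' i, c i * p i

lemma norm_mul_coe_unitInterval_le {x : ℝ} (hx : 0 ≤ x) (q : unitInterval) : ‖x * q‖ ≤ x := by
  rw [Real.norm_of_nonneg (mul_nonneg hx q.2.1)]
  exact mul_le_of_le_one_right hx q.2.2

lemma continuous_weightedSum (hc : ∀ i, 0 ≤ c i) (hs : Summable c) :
    Continuous (weightedSum c) :=
  continuous_tsum (fun i => by fun_prop) hs fun i p => norm_mul_coe_unitInterval_le (hc i) (p i)

lemma strictMono_weightedSum (hc : ∀ i, 0 < c i) (hs : Summable c) :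
    StrictMono (weightedSum c) := by
  have hsum (p : ι → unitInterval) : Summable fun i => c i * (p i : ℝ) :=
    hs.of_norm_bounded fun i => norm_mul_coe_unitInterval_le (hc i).le (p i)
  intro p p' hpp'
  obtain ⟨hle, i, hi⟩ := Pi.lt_def.1 hpp'
  exact (hsum p).tsum_lt_tsum (fun j => mul_le_mul_of_nonneg_left (hle j) (hc j).le)
    (mul_lt_mul_of_pos_left hi (hc i)) (hsum p')

lemma exists_continuous_strictMono_prod_pi (ι : Type*) [Countable ι] :
    ∃ S : unitInterval × (ι → unitInterval) → ℝ, Continuous S ∧ StrictMono S := by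
  have := Encodable.ofCountable ι
  obtain ⟨c, hc, _, hC, -⟩ := posSumOfEncodable one_pos ι
  have hcont := continuous_weightedSum (fun i => (hc i).le) hC.summable
  have hmono := strictMono_weightedSum hc hC.summable
  refine ⟨fun e => e.1 + weightedSum c e.2, by fun_prop, fun e e' h => ?_⟩
  rcases Prod.lt_iff.1 h with ⟨h₁, h₂⟩ | ⟨h₁, h₂⟩
  · exact add_lt_add_of_lt_of_le h₁ (hmono.monotone h₂)
  · exact add_lt_add_of_le_of_lt h₁ (hmono h₂)

end WeightedSum

lemma exists_strictMono_surjective_Icc {X : Type*} [TopologicalSpace X] [PreconnectedSpace X]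
    [PartialOrder X] [BoundedOrder X] [Nontrivial X] {S : X → ℝ} (hmono : StrictMono S)
    (hcont : Continuous S) {a b : ℝ} (hab : a < b) :
    ∃ H : X → Icc a b, Continuous H ∧ StrictMono H ∧ Surjective H := by
  have hS : 0 < S ⊤ - S ⊥ := sub_pos.2 (hmono bot_lt_top)
  let T (x : X) : ℝ := a + (b - a) / (S ⊤ - S ⊥) * (S x - S ⊥)
  have hTcont : Continuous T := by fun_prop
  have hTmono : StrictMono T := fun x y hxy => by
    have := mul_lt_mul_of_pos_left (sub_lt_sub_right (hmono hxy) (S ⊥))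
      (div_pos (sub_pos.2 hab) hS)
    exact add_lt_add_right this a
  have hTbot : T ⊥ = a := by simp [T]
  have hTtop : T ⊤ = b := by simp [T, hS.ne']
  refine ⟨fun x => ⟨T x, ?_, ?_⟩, hTcont.subtype_mk _, fun x y hxy => hTmono hxy, fun z => ?_⟩
  · exact hTbot.ge.trans (hTmono.monotone bot_le)
  · exact (hTmono.monotone le_top).trans hTtop.le
  · obtain ⟨x, hx⟩ := intermediate_value_univ ⊥ ⊤ hTcont (by rw [hTbot, hTtop]; exact z.2)
    exact ⟨x, Subtype.ext hx⟩

section RampRel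

/-- The point `p` solves the variational inequality `y - 1/2 - w * (p - s) ∈ N p`, where `N p` is
the normal cone of `[0, 1]` at `p`. For `w > 0` this says that `p` is the projection to `[0, 1]` of
`s + (y - 1/2) / w`, a ramp in `y` through `(1/2, s)`; for `w = 0` the ramp degenerates to a step
with a vertical segment at `y = 1/2`. Unlike the ramp, the relation passes to the limit `w → 0`. -/
def RampRel (w : ℝ) (s y p : unitInterval) : Prop :=
  ∀ q : unitInterval, ((y : ℝ) - 1 / 2 - w * (p - s)) * (q - p) ≤ 0

variable {w : ℝ} {s y y' p p' : unitInterval}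

-- Test each of the two variational inequalities with the solution of the other, and add.
lemma RampRel.mul_sq_le (h : RampRel w s y p) (h' : RampRel w s y' p') :
    w * (p' - p : ℝ) ^ 2 ≤ (y' - y) * (p' - p) := by
  linarith [h p', h' p]

lemma RampRel.le_of_lt (h : RampRel w s y p) (h' : RampRel w s y' p') (hw : 0 ≤ w)
    (hy : y < y') : p ≤ p' := by
  by_contra! hp
  have hdy : (0 : ℝ) < y' - y := sub_pos.2 hy
  have hdp : (p' - p : ℝ) < 0 := sub_neg.2 hp
  exact ((mul_neg_of_pos_of_neg hdy hdp).trans_le (by positivity)).not_ge (h.mul_sq_le h')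

lemma RampRel.le_of_le (h : RampRel w s y p) (h' : RampRel w s y' p') (hw : 0 < w)
    (hy : y ≤ y') : p ≤ p' := by
  by_contra! hp
  have hdy : (0 : ℝ) ≤ y' - y := sub_nonneg.2 hy
  have hdp : (p' - p : ℝ) < 0 := sub_neg.2 hp
  exact ((mul_nonpos_of_nonneg_of_nonpos hdy hdp.le).trans_lt
    (mul_pos hw (sq_pos_of_neg hdp))).not_ge (h.mul_sq_le h')

lemma rampRel_of_eq_half (hy : (y : ℝ) = 1 / 2) (h : w = 0 ∨ p = s) : RampRel w s y p := by
  intro q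
  rcases h with rfl | rfl <;> simp [hy]

lemma isClosed_setOf_rampRel {X : Type*} [TopologicalSpace X] {w : X → ℝ}
    {s y p : X → unitInterval} (hw : Continuous w) (hws : Continuous fun x => w x * s x)
    (hy : Continuous y) (hp : Continuous p) :
    IsClosed {x | RampRel (w x) (s x) (y x) (p x)} := by
  simp only [RampRel, mul_sub (w _), ofPred_forall]
  exact isClosed_iInter fun q => isClosed_le (by fun_prop) continuous_const

lemma sub_projIcc_mul_sub_projIcc_nonpos {a b : ℝ} (h : a ≤ b) (z : ℝ) (q : Icc a b) :
    (z - projIcc a b h z) * (q - projIcc a b h z) ≤ 0 := by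
  rcases le_total z a with hza | hza
  · rw [projIcc_of_le_left h hza]
    exact mul_nonpos_of_nonpos_of_nonneg (sub_nonpos.2 hza) (sub_nonneg.2 q.2.1)
  rcases le_total b z with hbz | hzb
  · rw [projIcc_of_right_le h hbz]
    exact mul_nonpos_of_nonneg_of_nonpos (sub_nonneg.2 hbz) (sub_nonpos.2 q.2.2)
  · simp [projIcc_of_mem h ⟨hza, hzb⟩]

/-- The ramp of slope `1 / w` through `(1/2, s)`, truncated to `[0, 1]`. It is meant for `w > 0`. -/
def ramp (w : ℝ) (s y : unitInterval) : unitInterval :=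
  projIcc 0 1 zero_le_one (s + (y - 1 / 2) / w)

lemma rampRel_ramp (hw : 0 < w) : RampRel w s y (ramp w s y) := by
  intro q
  have hfactor : (y : ℝ) - 1 / 2 - w * (ramp w s y - s) =
      w * (s + (y - 1 / 2) / w - ramp w s y) := by
    field_simp
    ring
  rw [hfactor, mul_assoc]
  exact mul_nonpos_of_nonneg_of_nonpos hw.le (sub_projIcc_mul_sub_projIcc_nonpos _ _ q)

lemma continuous_ramp (w : ℝ) (s : unitInterval) : Continuous (ramp w s) :=
  continuous_projIcc.comp (by fun_prop)

lemma ramp_zero (hw : 0 < w) (hw' : w ≤ 1 / 2) : ramp w s 0 = 0 := by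
  have hslope : (0 - 1 / 2) / w ≤ -1 := by
    rw [div_le_iff₀ hw]
    linarith
  exact projIcc_of_le_left _ (by simpa using add_le_add s.2.2 hslope)

lemma ramp_one (hw : 0 < w) (hw' : w ≤ 1 / 2) : ramp w s 1 = 1 := by
  have hslope : 1 ≤ (1 - 1 / 2) / w := by
    rw [le_div_iff₀ hw]
    linarith
  exact projIcc_of_right_le _ (by simpa using add_le_add s.2.1 hslope)

end RampRel

section BlowUp

open Filter Topology

/-- Points of the cube record a level `y` together with the heights `p n` of the ramps seen along a
two-sided orbit; the cube carries the product order. -/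
abbrev Cube := unitInterval × (ℤ → unitInterval)

/-- The shift of the heights, which leaves the level fixed. -/
def cubeShift : Cube ≃ₜ Cube where
  toFun c := (c.1, fun n => c.2 (n + 1))
  invFun c := (c.1, fun n => c.2 (n - 1))
  left_inv c := by simp
  right_inv c := by simp
  continuous_toFun := by fun_prop
  continuous_invFun := by fun_prop

lemma strictMono_cubeShift : StrictMono cubeShift :=
  Monotone.strictMono_of_injective (fun _ _ h => ⟨h.1, fun n => h.2 (n + 1)⟩) cubeShift.injective

/-- The data of a blow-up: a homeomorphism `base` of the base space, an aperiodic point `sing` whose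
orbit is to be blown up, and a curve which is continuous off `sing`. The discontinuity of the curve
at `sing` determines the gap that opens in the minimal set. -/
structure BlowUpData (Θ : Type*) [MetricSpace Θ] where
  base : Θ ≃ₜ Θ
  sing : Θ
  curve : Θ → unitInterval
  base_zpow_sing_ne : ∀ n : ℤ, n ≠ 0 → (base ^ n) sing ≠ sing
  continuousOn_curve : ContinuousOn curve {sing}ᶜ

namespace BlowUpData

variable {Θ : Type*} [MetricSpace Θ] (D : BlowUpData Θ)

lemma base_zpow_base (n : ℤ) (θ : Θ) : (D.base ^ n) (D.base θ) = (D.base ^ (n + 1)) θ := by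
  rw [zpow_add_one]
  rfl

lemma base_zpow_injective {θ : Θ} {m n : ℤ} (hm : (D.base ^ m) θ = D.sing)
    (hn : (D.base ^ n) θ = D.sing) : m = n := by
  by_contra hmn
  refine D.base_zpow_sing_ne (m - n) (sub_ne_zero.2 hmn) ?_
  calc (D.base ^ (m - n)) D.sing = (D.base ^ (m - n) * D.base ^ n) θ := by rw [← hn]; rfl
    _ = D.sing := by rw [← zpow_add, sub_add_cancel, hm]

/-- The reciprocal slope of the ramp over `θ`. It vanishes exactly at `sing`, and the bound `1 / 2`
lets every nondegenerate ramp go all the way from `0` to `1`. -/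
def width (θ : Θ) : ℝ := min (dist θ D.sing) (1 / 2)

lemma width_nonneg (θ : Θ) : 0 ≤ D.width θ := le_min dist_nonneg (by norm_num)

lemma width_le_half (θ : Θ) : D.width θ ≤ 1 / 2 := min_le_right _ _

lemma width_sing : D.width D.sing = 0 := by simp [width]

variable {D} in
lemma width_pos {θ : Θ} (h : θ ≠ D.sing) : 0 < D.width θ := lt_min (dist_pos.2 h) (by norm_num)

lemma continuous_width : Continuous D.width := by
  unfold width
  fun_prop

lemma continuous_width_mul_curve : Continuous fun θ => D.width θ * D.curve θ := by
  refine continuous_iff_continuousAt.2 fun θ => ?_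
  by_cases hθ : θ = D.sing
  · have hzero : Tendsto D.width (𝓝 D.sing) (𝓝 0) := D.width_sing ▸ D.continuous_width.tendsto _
    rw [ContinuousAt, hθ, D.width_sing, zero_mul]
    exact squeeze_zero_norm
      (fun η => norm_mul_coe_unitInterval_le (D.width_nonneg η) (D.curve η)) hzero
  · have hcurve := D.continuousOn_curve.continuousAt (isOpen_compl_singleton.mem_nhds hθ)
    exact D.continuous_width.continuousAt.mul (continuous_subtype_val.continuousAt.comp hcurve)

/-- The blow-up of the orbit of `sing`: each fibre is a chain in the cube, and over the orbit of
`sing` it contains a segment at the level `1 / 2`. -/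
def blowUp : Set (Θ × Cube) :=
  {e | ∀ n : ℤ,
    RampRel (D.width ((D.base ^ n) e.1)) (D.curve ((D.base ^ n) e.1)) e.2.1 (e.2.2 n)}

lemma isClosed_blowUp : IsClosed D.blowUp := by
  simp only [blowUp, ofPred_forall]
  refine isClosed_iInter fun n => ?_
  have hbase : Continuous fun e : Θ × Cube => (D.base ^ n) e.1 :=
    (D.base ^ n).continuous.comp continuous_fst
  exact isClosed_setOf_rampRel (D.continuous_width.comp hbase)
    (D.continuous_width_mul_curve.comp hbase) (by fun_prop) (by fun_prop)

instance [CompactSpace Θ] : CompactSpace D.blowUp :=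
  isCompact_iff_compactSpace.1 D.isClosed_blowUp.isCompact

variable {D}

lemma le_of_base_eq {e e' : D.blowUp} (hbase : e.1.1 = e'.1.1) (hlevel : e.1.2.1 ≤ e'.1.2.1)
    (hsing : ∀ n : ℤ, (D.base ^ n) e.1.1 = D.sing → e.1.2.2 n ≤ e'.1.2.2 n) :
    e.1.2 ≤ e'.1.2 := by
  refine ⟨hlevel, fun n => ?_⟩
  by_cases hn : (D.base ^ n) e.1.1 = D.sing
  · exact hsing n hn
  · exact (e.2 n).le_of_le (hbase ▸ e'.2 n) (width_pos hn) hlevel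

lemma le_of_base_eq_sing {e e' : D.blowUp} (he : e.1.1 = D.sing) (he' : e'.1.1 = D.sing)
    (hlevel : e.1.2.1 ≤ e'.1.2.1) (hheight : e.1.2.2 0 ≤ e'.1.2.2 0) : e.1.2 ≤ e'.1.2 :=
  le_of_base_eq (he.trans he'.symm) hlevel fun n hn => by
    rwa [D.base_zpow_injective hn (n := 0) he]

lemma le_of_level_lt {e e' : D.blowUp} (hbase : e.1.1 = e'.1.1) (hlevel : e.1.2.1 < e'.1.2.1) :
    e.1.2 ≤ e'.1.2 :=
  ⟨hlevel.le, fun n => (e.2 n).le_of_lt (hbase ▸ e'.2 n) (D.width_nonneg _) hlevel⟩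

-- An orbit meets `sing` at most once, so on one level only one height is not determined.
lemma le_total_of_base_eq {e e' : D.blowUp} (hbase : e.1.1 = e'.1.1) :
    e.1.2 ≤ e'.1.2 ∨ e'.1.2 ≤ e.1.2 := by
  rcases lt_trichotomy e.1.2.1 e'.1.2.1 with hlt | heq | hgt
  · exact .inl (le_of_level_lt hbase hlt)
  · by_cases horbit : ∃ n : ℤ, (D.base ^ n) e.1.1 = D.sing
    · obtain ⟨n, hn⟩ := horbit
      refine (le_total (e.1.2.2 n) (e'.1.2.2 n)).imp (fun hle => ?_) fun hle => ?_
      · refine le_of_base_eq hbase heq.le fun m hm => ?_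
        rwa [D.base_zpow_injective hm hn]
      · refine le_of_base_eq hbase.symm heq.ge fun m hm => ?_
        rwa [D.base_zpow_injective (hbase ▸ hm : (D.base ^ m) e.1.1 = D.sing) hn]
    · exact .inl (le_of_base_eq hbase heq.le fun n hn => absurd ⟨n, hn⟩ horbit)
  · exact .inr (le_of_level_lt hbase.symm hgt)

variable (D)

/-- The points of the base whose two-sided orbit avoids `sing`. -/
def regularBase : Set Θ := {θ | ∀ n : ℤ, (D.base ^ n) θ ≠ D.sing}

lemma base_mem_regularBase {θ : Θ} : D.base θ ∈ D.regularBase ↔ θ ∈ D.regularBase := by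
  simp only [regularBase, mem_ofPred_eq, base_zpow_base]
  exact (Equiv.addRight (1 : ℤ)).forall_congr_right (q := fun n => (D.base ^ n) θ ≠ D.sing)

lemma dense_regularBase [BaireSpace Θ] [(𝓝[≠] D.sing).NeBot] : Dense D.regularBase := by
  simp only [regularBase, ofPred_forall]
  exact dense_iInter_of_isOpen
    (fun n => isOpen_compl_singleton.preimage (D.base ^ n).continuous)
    (fun n => (dense_compl_singleton D.sing).preimage (D.base ^ n).isOpenMap)

/-- The fibre of the blow-up over a regular point of the base, parametrized by the level. -/
def rampSection (θ : Θ) (y : unitInterval) : Cube :=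
  (y, fun n => ramp (D.width ((D.base ^ n) θ)) (D.curve ((D.base ^ n) θ)) y)

lemma continuous_rampSection (θ : Θ) : Continuous (D.rampSection θ) :=
  continuous_id.prodMk (continuous_pi fun _ => continuous_ramp _ _)

variable {D} {θ : Θ}

lemma mk_rampSection_mem_blowUp (hθ : θ ∈ D.regularBase) (y : unitInterval) :
    (θ, D.rampSection θ y) ∈ D.blowUp :=
  fun n => rampRel_ramp (width_pos (hθ n))

lemma rampSection_zero (hθ : θ ∈ D.regularBase) : D.rampSection θ 0 = ⊥ :=
  Prod.ext rfl (funext fun n => ramp_zero (width_pos (hθ n)) (D.width_le_half _))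

lemma rampSection_one (hθ : θ ∈ D.regularBase) : D.rampSection θ 1 = ⊤ :=
  Prod.ext rfl (funext fun n => ramp_one (width_pos (hθ n)) (D.width_le_half _))

section Chart

variable {L : Type*} [LinearOrder L] {H : Cube → L}

lemma lt_of_apply_lt (hmono : StrictMono H) {e e' : D.blowUp} (hbase : e.1.1 = e'.1.1)
    (hH : H e.1.2 < H e'.1.2) : e.1.2 < e'.1.2 := by
  rcases le_total_of_base_eq hbase with hle | hle
  · exact hle.lt_of_ne fun h => hH.ne (congrArg H h)
  · exact absurd (hmono.monotone hle) hH.not_ge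

variable (D) in
/-- Straightens the fibres of the blow-up by a strictly increasing function on the cube. -/
def chart (H : Cube → L) (e : D.blowUp) : Θ × L := (e.1.1, H e.1.2)

lemma injective_chart (hmono : StrictMono H) : Injective (D.chart H) := by
  intro e e' h
  obtain ⟨hbase, hH⟩ := Prod.mk.inj h
  refine Subtype.ext (Prod.ext hbase ?_)
  rcases le_total_of_base_eq hbase with hle | hle
  · exact eq_of_le_of_not_lt hle fun hlt => (hmono hlt).ne hH
  · exact (eq_of_le_of_not_lt hle fun hlt => (hmono hlt).ne' hH).symm

lemma continuous_chart {L : Type*} [TopologicalSpace L] {H : Cube → L} (hcont : Continuous H) :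
    Continuous (D.chart H) := by
  unfold chart
  fun_prop

variable [TopologicalSpace L] [OrderClosedTopology L]

lemma mk_mem_range_chart (hcont : Continuous H) (hmono : Monotone H) (hsurj : Surjective H)
    (hθ : θ ∈ D.regularBase) (z : L) : (θ, z) ∈ range (D.chart H) := by
  obtain ⟨c, rfl⟩ := hsurj z
  have hc : H c ∈ Icc (H (D.rampSection θ 0)) (H (D.rampSection θ 1)) := by
    rw [rampSection_zero hθ, rampSection_one hθ]
    exact ⟨hmono bot_le, hmono le_top⟩
  obtain ⟨y, hy⟩ :=
    intermediate_value_univ 0 1 (hcont.comp (D.continuous_rampSection θ)) hc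
  exact ⟨⟨(θ, D.rampSection θ y), mk_rampSection_mem_blowUp hθ y⟩, Prod.ext rfl hy⟩

lemma surjective_chart [CompactSpace Θ] [(𝓝[≠] D.sing).NeBot] (hcont : Continuous H)
    (hmono : Monotone H) (hsurj : Surjective H) : Surjective (D.chart H) := by
  have hdense : Dense (range (D.chart H)) :=
    (D.dense_regularBase.prod dense_univ).mono fun x hx =>
      mk_mem_range_chart hcont hmono hsurj hx.1 x.2
  rw [← range_eq_univ, ← (isCompact_range (continuous_chart hcont)).isClosed.closure_eq,
    hdense.closure_eq]

/-- The chart as a homeomorphism onto the whole product, along which `shift` is transported to a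
forced increasing map. -/
def chartHomeomorph [CompactSpace Θ] [(𝓝[≠] D.sing).NeBot] (hcont : Continuous H)
    (hmono : StrictMono H) (hsurj : Surjective H) : D.blowUp ≃ₜ Θ × L :=
  Continuous.homeoOfEquivCompactToT2 (f := Equiv.ofBijective (D.chart H)
    ⟨injective_chart hmono, surjective_chart hcont hmono.monotone hsurj⟩) (continuous_chart hcont)

end Chart

variable (D)

lemma prodCongr_mem_blowUp (e : Θ × Cube) :
    e ∈ D.blowUp ↔ D.base.prodCongr cubeShift e ∈ D.blowUp := by
  have hshift : D.base.prodCongr cubeShift e ∈ D.blowUp ↔ ∀ n : ℤ, RampRel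
      (D.width ((D.base ^ (n + 1)) e.1)) (D.curve ((D.base ^ (n + 1)) e.1)) e.2.1
        (e.2.2 (n + 1)) := by
    simp only [← base_zpow_base]
    rfl
  exact (hshift.trans ((Equiv.addRight (1 : ℤ)).forall_congr_right (q := fun n => RampRel
    (D.width ((D.base ^ n) e.1)) (D.curve ((D.base ^ n) e.1)) e.2.1 (e.2.2 n)))).symm

/-- The homeomorphism of the blow-up induced by `base`. -/
def shift : D.blowUp ≃ₜ D.blowUp :=
  (D.base.prodCongr cubeShift).subtype D.prodCongr_mem_blowUp

lemma forcedIncreasing_conj_shift {I : Set ℝ} {H : Cube → I} (hmono : StrictMono H)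
    (Ψ : D.blowUp ≃ₜ Θ × I) (hΨ : ⇑Ψ = D.chart H) :
    ForcedIncreasing D.base (Ψ ∘ D.shift ∘ Ψ.symm) := by
  have hconj (e : D.blowUp) :
      (Ψ ∘ D.shift ∘ Ψ.symm) (D.chart H e) = D.chart H (D.shift e) := by simp [← hΨ]
  have hsurj : Surjective (D.chart H) := hΨ ▸ Ψ.surjective
  refine ⟨Ψ.continuous.comp (D.shift.continuous.comp Ψ.symm.continuous), fun q => ?_,
    fun θ x x' hxx' => ?_⟩
  · obtain ⟨e, rfl⟩ := hsurj q
    exact congrArg Prod.fst (hconj e)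
  · obtain ⟨e, he⟩ := hsurj (θ, x)
    obtain ⟨e', he'⟩ := hsurj (θ, x')
    dsimp only
    rw [← he, ← he', hconj, hconj]
    obtain ⟨rfl, rfl⟩ := Prod.mk.inj he
    obtain ⟨hbase, rfl⟩ := Prod.mk.inj he'
    exact hmono (strictMono_cubeShift (lt_of_apply_lt hmono hbase.symm hxx'))

/-- The part of the blow-up at the level `1 / 2` over the regular points of the base. -/
def regularPart : Set D.blowUp := {e | (e.1.2.1 : ℝ) = 1 / 2 ∧ e.1.1 ∈ D.regularBase}

/-- The almost automorphic minimal set of `shift`. Over `sing` its heights are only the cluster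
values of the curve there, whereas the blow-up contains the whole segment. -/
def minimalSet : Set D.blowUp := closure D.regularPart

lemma shift_image_minimalSet : D.shift '' D.minimalSet = D.minimalSet := by
  have hpreimage : D.shift ⁻¹' D.regularPart = D.regularPart :=
    ext fun e => and_congr_right' D.base_mem_regularBase
  rw [minimalSet, D.shift.image_closure]
  conv_lhs => rw [← hpreimage, image_preimage_eq _ D.shift.surjective]

variable {D}

lemma level_of_mem_minimalSet {e : D.blowUp} (he : e ∈ D.minimalSet) :
    (e.1.2.1 : ℝ) = 1 / 2 := by
  have hclosed : IsClosed {e : D.blowUp | (e.1.2.1 : ℝ) = 1 / 2} :=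
    isClosed_eq (by fun_prop) continuous_const
  exact closure_minimal (fun _ h => h.1) hclosed he

lemma mk_half_mem_blowUp {p : ℤ → unitInterval}
    (hp : ∀ n : ℤ, (D.base ^ n) θ ≠ D.sing → p n = D.curve ((D.base ^ n) θ)) :
    (θ, ⟨1 / 2, unitInterval.div_mem zero_le_one zero_le_two one_le_two⟩, p) ∈ D.blowUp := by
  intro n
  refine rampRel_of_eq_half rfl (or_iff_not_imp_right.2 fun hn => ?_)
  rw [not_imp_comm.1 (hp n) hn, width_sing]

variable (D) in
lemma exists_mem_fiber_sing (x : unitInterval) :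
    ∃ e : D.blowUp, e.1.1 = D.sing ∧ (e.1.2.1 : ℝ) = 1 / 2 ∧ e.1.2.2 0 = x := by
  let p : ℤ → unitInterval := update (fun n => D.curve ((D.base ^ n) D.sing)) 0 x
  have hp (n : ℤ) (hn : (D.base ^ n) D.sing ≠ D.sing) : p n = D.curve ((D.base ^ n) D.sing) := by
    refine update_of_ne ?_ _ _
    rintro rfl
    exact hn rfl
  have hp₀ : p 0 = x := update_self _ _ _
  exact ⟨⟨_, mk_half_mem_blowUp hp⟩, rfl, rfl, hp₀⟩

lemma height_eq_curve {e : D.blowUp} (hlevel : (e.1.2.1 : ℝ) = 1 / 2) {n : ℤ}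
    (hn : (D.base ^ n) e.1.1 ≠ D.sing) : e.1.2.2 n = D.curve ((D.base ^ n) e.1.1) :=
  le_antisymm ((e.2 n).le_of_le (rampRel_of_eq_half hlevel (.inr rfl)) (width_pos hn) le_rfl)
    ((rampRel_of_eq_half hlevel (.inr rfl)).le_of_le (e.2 n) (width_pos hn) le_rfl)

lemma eq_of_mem_regularPart {e e' : D.blowUp} (he : e ∈ D.minimalSet) (he' : e' ∈ D.regularPart)
    (hbase : e.1.1 = e'.1.1) : e = e' := by
  have hlevel : e.1.2.1 = e'.1.2.1 := Subtype.ext ((level_of_mem_minimalSet he).trans he'.1.symm)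
  refine Subtype.ext (Prod.ext hbase (le_antisymm ?_ ?_))
  · exact le_of_base_eq hbase hlevel.le fun n hn => absurd (hbase ▸ hn) (he'.2 n)
  · exact le_of_base_eq hbase.symm hlevel.ge fun n hn => absurd hn (he'.2 n)

lemma exists_mem_regularPart (hθ : θ ∈ D.regularBase) : ∃ e ∈ D.regularPart, e.1.1 = θ :=
  ⟨⟨_, mk_half_mem_blowUp fun _ _ => rfl⟩, ⟨rfl, hθ⟩, rfl⟩

lemma subsingleton_minimalSet_inter_fiber (hθ : θ ∈ D.regularBase) :
    (D.minimalSet ∩ {e | e.1.1 = θ}).Subsingleton := by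
  obtain ⟨e, he, rfl⟩ := exists_mem_regularPart hθ
  exact fun e₁ h₁ e₂ h₂ =>
    (eq_of_mem_regularPart h₁.1 he h₁.2).trans (eq_of_mem_regularPart h₂.1 he h₂.2).symm

lemma mapClusterPt_of_mem_minimalSet {e : D.blowUp} (he : e ∈ D.minimalSet)
    (hsing : e.1.1 = D.sing) : MapClusterPt (e.1.2.2 0) (𝓝[≠] D.sing) D.curve := by
  have : (𝓝[D.regularPart] e).NeBot := mem_closure_iff_nhdsWithin_neBot.1 he
  have hbase : Tendsto (fun x : D.blowUp => x.1.1) (𝓝[D.regularPart] e) (𝓝[≠] D.sing) := by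
    refine tendsto_nhdsWithin_iff.2 ⟨?_, eventually_mem_nhdsWithin.mono fun x hx => hx.2 0⟩
    exact hsing ▸ Continuous.continuousWithinAt (by fun_prop)
  have hheight : Tendsto (fun x : D.blowUp => x.1.2.2 0) (𝓝[D.regularPart] e) (𝓝 (e.1.2.2 0)) :=
    Continuous.continuousWithinAt (by fun_prop)
  exact .of_comp hbase (hheight.congr' <| eventually_mem_nhdsWithin.mono fun x hx =>
    height_eq_curve hx.1 (hx.2 0)).mapClusterPt

section Compact

variable [CompactSpace Θ] [(𝓝[≠] D.sing).NeBot]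

lemma exists_mem_minimalSet (θ : Θ) : ∃ e ∈ D.minimalSet, e.1.1 = θ := by
  have hclosed : IsClosed ((fun e : D.blowUp => e.1.1) '' D.minimalSet) :=
    (isClosed_closure.isCompact.image (by fun_prop)).isClosed
  have hregular : D.regularBase ⊆ (fun e : D.blowUp => e.1.1) '' D.minimalSet := fun θ hθ => by
    obtain ⟨e, he, rfl⟩ := exists_mem_regularPart hθ
    exact ⟨e, subset_closure he, rfl⟩
  exact hclosed.closure_subset_iff.2 hregular (D.dense_regularBase θ)

lemma exists_mem_minimalSet_of_mapClusterPt {x : unitInterval}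
    (hx : MapClusterPt x (𝓝[≠] D.sing) D.curve) :
    ∃ e ∈ D.minimalSet, e.1.1 = D.sing ∧ e.1.2.2 0 = x := by
  let q (e : D.blowUp) : Θ × unitInterval := (e.1.1, e.1.2.2 0)
  have hclosed : IsClosed (q '' D.minimalSet) :=
    (isClosed_closure.isCompact.image (by fun_prop)).isClosed
  have hcurve : ∀ θ ≠ D.sing, (θ, D.curve θ) ∈ q '' D.minimalSet := fun θ hθ => by
    obtain ⟨e, he, rfl⟩ := exists_mem_minimalSet (D := D) θ
    exact ⟨e, he, Prod.ext rfl (height_eq_curve (level_of_mem_minimalSet he) hθ)⟩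
  obtain ⟨U, hU, hUx⟩ := mapClusterPt_iff_ultrafilter.1 hx
  have hUsing : Tendsto id (U : Filter Θ) (𝓝 D.sing) := hU.trans nhdsWithin_le_nhds
  obtain ⟨e, he, heq⟩ := hclosed.mem_of_tendsto (hUsing.prodMk_nhds hUx)
    (Filter.mem_of_superset (hU self_mem_nhdsWithin) hcurve)
  exact ⟨e, he, Prod.mk.inj heq⟩

lemma isMinimalSet_minimalSet (horbit : ∀ θ, DenseRange fun n : ℕ => D.base^[n] θ) :
    IsMinimalSet D.shift D.minimalSet := by
  have hne : D.regularPart.Nonempty := closure_nonempty_iff.1 <|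
    (exists_mem_minimalSet D.sing).imp fun _ h => h.1
  exact isMinimalSet_closure_of_injective_fibers
    (π := fun e : D.blowUp => e.1.1) (by fun_prop) (fun _ => rfl) horbit hne
    D.shift_image_minimalSet fun _ he _ he' => eq_of_mem_regularPart he he'

lemma exists_notMem_minimalSet_between {l m u : unitInterval}
    (hl : MapClusterPt l (𝓝[≠] D.sing) D.curve) (hm : ¬ MapClusterPt m (𝓝[≠] D.sing) D.curve)
    (hu : MapClusterPt u (𝓝[≠] D.sing) D.curve) (hlm : l ≤ m) (hmu : m ≤ u) :
    ∃ e₀ ∈ D.minimalSet, ∃ e ∉ D.minimalSet, ∃ e₁ ∈ D.minimalSet,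
      e₀.1.1 = e.1.1 ∧ e₁.1.1 = e.1.1 ∧ e.1.2 ∈ Icc e₀.1.2 e₁.1.2 := by
  obtain ⟨e₀, he₀, hbase₀, rfl⟩ := exists_mem_minimalSet_of_mapClusterPt hl
  obtain ⟨e, hbase, hlevel, rfl⟩ := D.exists_mem_fiber_sing m
  obtain ⟨e₁, he₁, hbase₁, rfl⟩ := exists_mem_minimalSet_of_mapClusterPt hu
  have hlevel₀ : e₀.1.2.1 = e.1.2.1 :=
    Subtype.ext ((level_of_mem_minimalSet he₀).trans hlevel.symm)
  have hlevel₁ : e.1.2.1 = e₁.1.2.1 :=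
    Subtype.ext (hlevel.trans (level_of_mem_minimalSet he₁).symm)
  exact ⟨e₀, he₀, e, fun he => hm (mapClusterPt_of_mem_minimalSet he hbase), e₁, he₁,
    hbase₀.trans hbase.symm, hbase₁.trans hbase.symm,
    le_of_base_eq_sing hbase₀ hbase hlevel₀.le hlm, le_of_base_eq_sing hbase hbase₁ hlevel₁.le hmu⟩

end Compact

theorem exists_isAAMinimal_ssubset_filledEnvelope {Θ : Type} [MetricSpace Θ] [CompactSpace Θ]
    {D : BlowUpData Θ} (horbit : ∀ θ, DenseRange fun n : ℕ => D.base^[n] θ)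
    (hequi : UniformEquicontinuous fun n : ℤ => zIter D.base.toEquiv n) {l m u : unitInterval}
    (hl : MapClusterPt l (𝓝[≠] D.sing) D.curve) (hm : ¬ MapClusterPt m (𝓝[≠] D.sing) D.curve)
    (hu : MapClusterPt u (𝓝[≠] D.sing) D.curve) (hlm : l ≤ m) (hmu : m ≤ u)
    {a b : ℝ} (hab : a < b) :
    ∃ (f : Θ × Icc a b → Θ × Icc a b) (M : Set (Θ × Icc a b)),
      ForcedIncreasing D.base f ∧ IsAAMinimal f M ∧ M ⊂ FilledEnvelope M := by
  have : (𝓝[≠] D.sing).NeBot := .of_map (hl.neBot.mono inf_le_right)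
  obtain ⟨S, hScont, hSmono⟩ := exists_continuous_strictMono_prod_pi ℤ
  obtain ⟨H, hcont, hmono, hsurj⟩ := exists_strictMono_surjective_Icc hSmono hScont hab
  let Ψ : D.blowUp ≃ₜ Θ × Icc a b := chartHomeomorph hcont hmono hsurj
  have hinc := D.forcedIncreasing_conj_shift hmono Ψ rfl
  have hmin := (isMinimalSet_minimalSet horbit).image_homeomorph Ψ
  refine ⟨_, _, hinc, hmin.isAAMinimal_of_semiconj continuous_fst hinc.2.1 horbit hequi
    (D.dense_regularBase.mono fun θ hθ => ?_), ssubset_iff_exists.2 ⟨fun q hq => ?_, ?_⟩⟩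
  · rintro _ ⟨⟨e, he, rfl⟩, hθe⟩ _ ⟨⟨e', he', rfl⟩, hθe'⟩
    exact congrArg Ψ (subsingleton_minimalSet_inter_fiber hθ ⟨he, hθe⟩ ⟨he', hθe'⟩)
  · exact mem_filledEnvelope (Metric.isBounded_Icc a b) hq hq ⟨le_rfl, le_rfl⟩
  · obtain ⟨e₀, he₀, e, he, e₁, he₁, hbase₀, hbase₁, hmem⟩ :=
      exists_notMem_minimalSet_between hl hm hu hlm hmu
    refine ⟨Ψ e, mem_filledEnvelope (Metric.isBounded_Icc a b) ⟨e₀, he₀, Prod.ext hbase₀ rfl⟩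
      ⟨e₁, he₁, Prod.ext hbase₁ rfl⟩ ⟨hmono.monotone hmem.1, hmono.monotone hmem.2⟩, ?_⟩
    rwa [Ψ.injective.mem_set_image]

end BlowUpData

end BlowUp

section Rotation

lemma zIter_addRight {G : Type*} [AddCommGroup G] [TopologicalSpace G] [SeparatelyContinuousAdd G]
    (r : G) (n : ℤ) : zIter (Homeomorph.addRight r).toEquiv n = (· + n • r) := by
  let translation : Multiplicative G →* Equiv.Perm G :=
    MonoidHom.mk' (fun s => Equiv.addRight s.toAdd) fun s t => Equiv.ext fun x => by
      simp only [toAdd_mul, Equiv.coe_addRight, Equiv.Perm.coe_mul, comp_apply]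
      abel
  exact congrArg DFunLike.coe (map_zpow translation (.ofAdd r) n).symm

lemma denseRange_iterate_addRight {G : Type*} [AddGroup G] [TopologicalSpace G]
    [IsTopologicalAddGroup G] [CompactSpace G] {r : G} (hr : DenseRange fun n : ℤ => n • r)
    (x : G) : DenseRange fun n : ℕ => (Homeomorph.addRight r)^[n] x := by
  simp only [Homeomorph.coe_addRight, add_right_iterate]
  exact (Homeomorph.addLeft x).surjective.denseRange.comp (denseRange_zsmul_iff_nsmul.1 hr)
    (Homeomorph.addLeft x).continuous

lemma uniformEquicontinuous_zIter_addRight {G : Type*} [SeminormedAddCommGroup G] (r : G) :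
    UniformEquicontinuous fun n : ℤ => zIter (Homeomorph.addRight r).toEquiv n :=
  LipschitzWith.uniformEquicontinuous _ 1 fun n =>
    zIter_addRight r n ▸ (isometry_add_right (n • r)).lipschitz

lemma zsmul_coe_ne_zero_of_irrational {ρ : ℝ} (hρ : Irrational ρ) {n : ℤ} (hn : n ≠ 0) :
    n • (ρ : T1) ≠ 0 := by
  rw [← AddCircle.coe_zsmul, Ne, AddCircle.coe_eq_zero_iff]
  rintro ⟨m, hm⟩
  exact (hρ.intCast_mul hn).ne_int m (by simpa using hm.symm)

end Rotation

section Sawtooth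

open Filter Topology

/-- The representative in `[0, 1)` of a point of the circle. -/
def sawtooth (t : T1) : unitInterval :=
  ⟨AddCircle.equivIco 1 0 t, Ico_subset_Icc_self (by simpa using (AddCircle.equivIco 1 0 t).2)⟩

lemma coe_sawtooth (t : T1) : ((sawtooth t : ℝ) : T1) = t := AddCircle.coe_equivIco

lemma sawtooth_coe {t : ℝ} (ht : t ∈ Ico 0 1) : (sawtooth t : ℝ) = t :=
  AddCircle.equivIco_coe_of_mem (by simpa using ht)

lemma continuousOn_sawtooth : ContinuousOn sawtooth {0}ᶜ := fun _ ht =>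
  (continuous_subtype_val.continuousAt.comp
    (AddCircle.continuousAt_equivIco 1 0 ht)).codRestrict _ |>.continuousWithinAt

lemma mapClusterPt_sawtooth_iff {x : unitInterval} :
    MapClusterPt x (𝓝[≠] 0) sawtooth ↔ ((x : ℝ) : T1) = 0 := by
  constructor <;> intro hx
  · have hproj : Continuous fun y : unitInterval => ((y : ℝ) : T1) := by fun_prop
    have hsection : (fun y : unitInterval => ((y : ℝ) : T1)) ∘ sawtooth = id := funext coe_sawtooth
    have hcluster := hx.continuousAt_comp hproj.continuousAt
    rw [hsection, mapClusterPt_id_iff] at hcluster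
    exact eq_of_nhds_neBot (hcluster.mono nhdsWithin_le_nhds)
  · have hx' : (x : ℝ) ∈ closure (Ioo (0 : ℝ) 1) := by
      rw [closure_Ioo zero_ne_one]
      exact x.2
    have : (𝓝[Ioo 0 1] (x : ℝ)).NeBot := mem_closure_iff_nhdsWithin_neBot.1 hx'
    have hcoe : Tendsto (fun t : ℝ => (t : T1)) (𝓝[Ioo 0 1] x) (𝓝[≠] 0) := by
      refine tendsto_nhdsWithin_iff.2 ⟨hx ▸ Continuous.continuousWithinAt (by fun_prop),
        eventually_mem_nhdsWithin.mono fun t ht => ?_⟩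
      exact (AddCircle.coe_eq_zero_iff_of_mem_Ico (Ioo_subset_Ico_self ht)).not.2 ht.1.ne'
    have hsawtooth : Tendsto (sawtooth ∘ fun t : ℝ => (t : T1)) (𝓝[Ioo 0 1] x) (𝓝 x) :=
      tendsto_subtype_rng.2 <| (tendsto_id.mono_left nhdsWithin_le_nhds).congr' <|
        eventually_mem_nhdsWithin.mono fun t ht => (sawtooth_coe (Ioo_subset_Ico_self ht)).symm
    exact .of_comp hcoe hsawtooth.mapClusterPt

end Sawtooth

theorem stmt2_general {a b : ℝ} (hab : a < b) {ρ : ℝ} (hρ : Irrational ρ) :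
    ∃ (f : T1 × Icc a b → T1 × Icc a b) (M : Set (T1 × Icc a b)),
      ForcedIncreasing (fun θ : T1 => θ + (ρ : T1)) f ∧
      IsAAMinimal f M ∧ M ⊂ FilledEnvelope M := by
  let D : BlowUpData T1 :=
    { base := Homeomorph.addRight (ρ : T1)
      sing := 0
      curve := sawtooth
      base_zpow_sing_ne := fun n hn => by
        simpa [← zIter_toEquiv, zIter_addRight] using zsmul_coe_ne_zero_of_irrational hρ hn
      continuousOn_curve := continuousOn_sawtooth }
  have hdense : DenseRange fun n : ℤ => n • (ρ : T1) :=
    AddCircle.denseRange_zsmul_coe_iff.2 (by rwa [div_one])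
  have hhalf : ((1 / 2 : ℝ) : T1) ≠ 0 := by
    rw [Ne, AddCircle.coe_eq_zero_iff_of_mem_Ico (by norm_num)]
    norm_num
  let half : unitInterval := ⟨1 / 2, by norm_num, by norm_num⟩
  exact BlowUpData.exists_isAAMinimal_ssubset_filledEnvelope (D := D) (l := 0) (m := half) (u := 1)
    (denseRange_iterate_addRight hdense) (uniformEquicontinuous_zIter_addRight _)
    (mapClusterPt_sawtooth_iff.2 (AddCircle.coe_zero 1)) (mapClusterPt_sawtooth_iff.not.2 hhalf)
    (mapClusterPt_sawtooth_iff.2 (AddCircle.coe_period 1)) bot_le le_top hab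

/-- there is a quasiperiodically forced increasing interval map with an
almost automorphic minimal set which is not filled-in. -/
theorem stmt2 :
    ∃ I : Set ℝ, IsCompact I ∧ I.OrdConnected ∧
      ∃ ρ : ℝ, Irrational ρ ∧
        ∃ (f : T1 × ↥I → T1 × ↥I) (M : Set (T1 × ↥I)),
          ForcedIncreasing (fun θ : T1 => θ + (ρ : T1)) f ∧
          IsAAMinimal f M ∧ M ⊂ FilledEnvelope M := by
  exact ⟨Icc 0 1, isCompact_Icc, ordConnected_Icc, √2, irrational_sqrt_two,
    stmt2_general zero_lt_one irrational_sqrt_two⟩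

end
end

section
/- There exists a minimal homeomorphism f of the two-torus T² which is point-distal, not distal, and almost automorphic; moreover f can be taken of skew product form f(θ,x) = (θ+ω, f_θ(x)) over an irrational rotation, semiconjugate to an irrational rotation (θ,x) ↦ (θ+ω, x+ρ) of T² via a map h which is bijective except on a countable union of vertical segments (each mapped to a single point of one orbit of the rotation), and whose set of non-distal points equals this union of segments. -/
open Set Function MeasureTheory

noncomputable section

/-- `x` is a distal point of the invertible system `f`:
`inf_{n ∈ ℤ} d(fⁿ(x), fⁿ(y)) > 0` for every `y ≠ x`. -/
def IsDistalPt {X : Type*} [MetricSpace X] (f : Equiv.Perm X) (x : X) : Prop :=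
  ∀ y : X, y ≠ x → ∃ c > (0 : ℝ), ∀ n : ℤ, c ≤ dist (zIter f n x) (zIter f n y)

/-!
Let `g` generate a dense subgroup of `Θ × T1`. A function `u` equal to `(θ, y) ↦ y / max |θ| |y|`
near the origin takes all values of `[-1, 1]` there, so the closure of the graph of
`z ↦ (u (z - n • g))ₙ` replaces each point `n • g` by an interval, and translation by `g` lifts to
it as a shift. Adding `∑ₙ a n * u (z - n • g)` to the second coordinate of `z` maps this blow-up
continuously to `Θ × T1`, the interval over `n • g` becoming a vertical segment of height `2 * a n`.
Along vertical lines `u` decreases with slope at most `8`, so this map is injective as soon as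
`8 * ∑ₙ a n < 1`; its image is closed and contains the dense set of fibres that miss the orbit, so
it is a homeomorphism.

Points off the segments are single preimages under the map collapsing the segments: they are distal
because translation by `g` is an isometry, and minimality follows from their density. Points of a
common segment are asymptotic because `a n → 0`.
-/

section Translation

lemma injective_zsmul_of_denseRange {G : Type*} [AddGroup G] [TopologicalSpace G] [T1Space G]
    [Infinite G] {g : G} (hg : DenseRange fun n : ℤ => n • g) : Injective fun n : ℤ => n • g := by
  rw [injective_zsmul_iff_not_isOfFinAddOrder]
  intro hfin
  have hfinite : (range fun n : ℤ => n • g).Finite := hfin.finite_zmultiples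
  rw [← hfinite.isClosed.closure_eq, hg.closure_range] at hfinite
  exact infinite_univ hfinite

lemma dense_compl_of_countable {G : Type*} [AddGroup G] [TopologicalSpace G]
    [IsTopologicalAddGroup G] [T2Space G] [CompactSpace G] [Infinite G] {s : Set G}
    (hs : s.Countable) : Dense sᶜ := by
  have not_isOpen_singleton (x : G) : ¬IsOpen {x} := fun hx => by
    have hdiscrete : DiscreteTopology G := discreteTopology_of_isOpen_singleton_zero <| by
      simpa using (isOpenMap_add_left (-x)) _ hx
    exact not_finite_iff_infinite.2 ‹Infinite G› finite_of_compact_of_discrete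
  rw [← biUnion_of_singleton s, compl_iUnion₂]
  exact dense_biInter_of_isOpen (fun x _ => isOpen_compl_singleton) hs fun x _ =>
    dense_compl_singleton_iff_not_open.2 (not_isOpen_singleton x)

lemma exists_denseRange_zsmul {G : Type*} [AddGroup G] [TopologicalSpace G]
    [IsTopologicalAddGroup G] [BaireSpace G] [SecondCountableTopology G]
    (h : ∀ U V : Set G, IsOpen U → U.Nonempty → IsOpen V → V.Nonempty →
      ∃ v ∈ U, ∃ n : ℤ, n • v ∈ V) :
    ∃ g : G, DenseRange fun n : ℤ => n • g := by
  let B := TopologicalSpace.countableBasis G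
  have hB : TopologicalSpace.IsTopologicalBasis B := TopologicalSpace.isBasis_countableBasis G
  have hdense : Dense (⋂ V ∈ B, ⋃ n : ℤ, (fun g : G => n • g) ⁻¹' V) := by
    refine dense_biInter_of_isOpen
      (fun V hV => isOpen_iUnion fun n => (hB.isOpen hV).preimage (continuous_zsmul n))
      (TopologicalSpace.countable_countableBasis G) fun V hV => ?_
    refine dense_iff_inter_open.2 fun U hU hUne => ?_
    obtain ⟨v, hvU, n, hnV⟩ := h U V hU hUne (hB.isOpen hV)
      (TopologicalSpace.nonempty_of_mem_countableBasis hV)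
    exact ⟨v, hvU, mem_iUnion.2 ⟨n, hnV⟩⟩
  obtain ⟨g, hg⟩ := hdense.nonempty
  refine ⟨g, hB.dense_iff.2 fun V hV _ => ?_⟩
  obtain ⟨n, hn⟩ := mem_iUnion.1 (mem_iInter₂.1 hg V hV)
  exact ⟨n • g, hn, n, rfl⟩

lemma exists_zsmul_eq_norm_sub_le (x y : T1) {n : ℕ} (hn : 0 < n) :
    ∃ v : T1, (n : ℤ) • v = y ∧ ‖v - x‖ ≤ 1 / n := by
  obtain ⟨r, ⟨hr₀, hr₁⟩, hr⟩ := AddCircle.eq_coe_Ico (y - (n : ℤ) • x)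
  have hn' : (0 : ℝ) < n := Nat.cast_pos.2 hn
  refine ⟨x + ((r / n : ℝ) : T1), ?_, ?_⟩
  · have hsmul : (n : ℤ) • (r / n) = r := by
      rw [zsmul_eq_mul, Int.cast_natCast, mul_div_cancel₀ r hn'.ne']
    rw [smul_add, ← AddCircle.coe_zsmul, hsmul, hr, add_sub_cancel]
  · calc ‖x + ((r / n : ℝ) : T1) - x‖ = ‖((r / n : ℝ) : T1)‖ := by rw [add_sub_cancel_left]
      _ ≤ |r / n| := QuotientAddGroup.norm_mk_le_norm
      _ = r / n := abs_of_nonneg (by positivity)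
      _ ≤ 1 / n := by gcongr

lemma exists_denseRange_zsmul_torus : ∃ g : T1 × T1, DenseRange fun n : ℤ => n • g := by
  refine exists_denseRange_zsmul fun U V hU ⟨x, hx⟩ _ ⟨y, hy⟩ => ?_
  obtain ⟨ε, hε, hball⟩ := Metric.isOpen_iff.1 hU x hx
  obtain ⟨k, hk⟩ := exists_nat_one_div_lt hε
  obtain ⟨v, hv, hvx⟩ := exists_zsmul_eq_norm_sub_le x.1 y.1 k.succ_pos
  obtain ⟨w, hw, hwx⟩ := exists_zsmul_eq_norm_sub_le x.2 y.2 k.succ_pos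
  rw [← Nat.cast_succ] at hk
  refine ⟨(v, w), hball ?_, (k.succ : ℤ), ?_⟩
  · rw [Metric.mem_ball, dist_eq_norm]
    exact max_lt (hvx.trans_lt hk) (hwx.trans_lt hk)
  · rwa [Prod.smul_mk, hv, hw]

end Translation

section Extension

lemma map_zIter {X Y : Type*} [AddGroup Y] {f : Equiv.Perm X} {h : X → Y} {g : Y}
    (hf : ∀ x, h (f x) = h x + g) (n : ℤ) (x : X) : h (zIter f n x) = h x + n • g := by
  unfold zIter
  induction n using Int.induction_on with
  | zero => simp
  | succ k ih =>
    rw [zpow_add_one, (Commute.zpow_self f _).eq, Equiv.Perm.mul_apply, hf, ih, add_zsmul,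
      one_zsmul, add_assoc]
  | pred k ih =>
    have hstep : h ((f ^ (-(k : ℤ) - 1)) x) + g = h x + (-(k : ℤ)) • g := by
      rw [← hf, ← Equiv.Perm.mul_apply, mul_self_zpow, sub_add_cancel, ih]
    rw [eq_sub_of_add_eq hstep, sub_zsmul, one_zsmul, add_sub_assoc, sub_eq_add_neg]

variable {X Y : Type*}

section Topological

variable [TopologicalSpace X] [CompactSpace X] [AddGroup Y] [TopologicalSpace Y]
  [IsTopologicalAddGroup Y] [T2Space Y]

lemma dense_range_zIter_of_dense_injectivity_points {f : Equiv.Perm X} {h : X → Y} {g : Y}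
    (hc : Continuous h) (hf : ∀ x, h (f x) = h x + g)
    (hg : DenseRange fun n : ℤ => n • g) (hinj : Dense {x | ∀ x', h x' = h x → x' = x})
    (x : X) : Dense (range fun n : ℤ => zIter f n x) := by
  set M := closure (range fun n : ℤ => zIter f n x)
  have himage : h '' M = univ := by
    have hrange : range (fun n : ℤ => h x + n • g) ⊆ h '' M := by
      rintro _ ⟨n, rfl⟩
      exact ⟨zIter f n x, subset_closure ⟨n, rfl⟩, map_zIter hf n x⟩
    have hdense : DenseRange fun n : ℤ => h x + n • g :=
      (Homeomorph.addLeft (h x)).surjective.denseRange.comp hg (Homeomorph.addLeft (h x)).continuous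
    exact (hdense.mono hrange).closure_eq ▸
      (isClosed_closure.isCompact.image hc).isClosed.closure_eq.symm
  have hsub : {x | ∀ x', h x' = h x → x' = x} ⊆ M := fun y hy => by
    obtain ⟨y', hy'M, hy'⟩ : h y ∈ h '' M := himage ▸ mem_univ _
    exact hy y' hy' ▸ hy'M
  exact dense_closure.1 (hinj.mono hsub)

end Topological

lemma isDistalPt_of_injectivity_point [MetricSpace X] [CompactSpace X] [NormedAddCommGroup Y]
    {f : Equiv.Perm X} {h : X → Y} {g : Y} (hc : Continuous h) (hf : ∀ x, h (f x) = h x + g)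
    {x : X} (hx : ∀ x', h x' = h x → x' = x) : IsDistalPt f x := by
  intro y hyx
  have hne : h x ≠ h y := fun heq => hyx (hx y heq.symm)
  obtain ⟨δ, hδ, hclose⟩ := Metric.uniformContinuous_iff.1
    (CompactSpace.uniformContinuous_of_continuous hc) _ (dist_pos.2 hne)
  refine ⟨δ, hδ, fun n => not_lt.1 fun hlt => ?_⟩
  simpa [map_zIter hf] using hclose hlt

lemma not_isDistalPt_of_tendsto [MetricSpace X] {f : Equiv.Perm X} {x y : X} (hyx : y ≠ x)
    {l : Filter ℤ} [l.NeBot]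
    (hlim : Filter.Tendsto (fun n => dist (zIter f n x) (zIter f n y)) l (nhds 0)) :
    ¬IsDistalPt f x := by
  intro hx
  obtain ⟨c, hc, hle⟩ := hx y hyx
  exact hc.not_ge (ge_of_tendsto' hlim hle)

lemma IsFactorMap.nonempty_aaWitness [TopologicalSpace X] {Y : Type} [NormedAddCommGroup Y]
    [CompactSpace Y] {f : X → X} {g : Y} {h : X → Y} (hh : IsFactorMap f (· + g) h)
    (h11 : AlmostOneOne h) : Nonempty (AAWitness f) :=
  ⟨{  Y := Y
      g := Homeomorph.addRight g
      hmap := h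
      factor := hh
      a11 := h11
      ap := fun ε hε => ⟨ε, hε, fun y y' hyy' n => by
        have hiter (z : Y) : zIter (Homeomorph.addRight g).toEquiv n z = z + n • g :=
          map_zIter (h := id) (fun _ => rfl) n z
        rwa [hiter, hiter, dist_add_right]⟩ }⟩

end Extension

section BlowUpCoordinate

/-- Monotonicity of `r ↦ r / max t |r|`, stated so that all values in `[-1, 1]` are allowed where
the denominator vanishes. -/
lemma le_of_mul_max_abs_eq {t r s u v : ℝ} (hrs : r < s) (hu : |u| ≤ 1) (hv : |v| ≤ 1)
    (hur : u * max t |r| = r) (hvs : v * max t |s| = s) : u ≤ v := by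
  set M := max t |r|
  set N := max t |s|
  have hM : 0 ≤ M := (abs_nonneg r).trans (le_max_right _ _)
  have hN : 0 ≤ N := (abs_nonneg s).trans (le_max_right _ _)
  by_contra! hvu
  have hvNM : 0 < v * (N - M) := by nlinarith
  have huNM : 0 < u * (N - M) := by nlinarith
  rcases lt_or_ge M N with hMN | hNM
  · have hv₀ : 0 < v := pos_of_mul_pos_left hvNM (sub_nonneg.2 hMN.le)
    have hNs : N = |s| := (max_choice t |s|).resolve_left
      ((le_max_left t |r|).trans_lt hMN).ne'
    have hvN : v * N = N := by rw [hvs, hNs, abs_of_pos (hvs ▸ mul_pos hv₀ (hM.trans_lt hMN))]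
    nlinarith [abs_le.1 hu]
  · have hu₀ : u < 0 := neg_of_mul_pos_left huNM (sub_nonpos.2 hNM)
    have hNM' : N < M := sub_neg.1 (neg_of_mul_pos_right huNM hu₀.le)
    have hMr : M = |r| := (max_choice t |r|).resolve_left
      ((le_max_left t |s|).trans_lt hNM').ne'
    have huM : u * M = -M := by
      rw [hur, hMr, abs_of_neg (hur ▸ mul_neg_of_neg_of_pos hu₀ (hN.trans_lt hNM')), neg_neg]
    nlinarith [abs_le.1 hv]

/-- The 1-periodic function of slopes `±1` which is `y ↦ y` on `[-1/4, 1/4]`. -/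
def triangleWave (y : T1) : ℝ := 1 / 4 - ‖y - ((1 / 4 : ℝ) : T1)‖

lemma continuous_triangleWave : Continuous triangleWave := by
  unfold triangleWave
  fun_prop

lemma abs_triangleWave_sub_le (x y : T1) : |triangleWave x - triangleWave y| ≤ ‖x - y‖ := by
  unfold triangleWave
  rw [sub_sub_sub_cancel_left, norm_sub_rev x y]
  simpa using abs_norm_sub_norm_le (y - ((1 / 4 : ℝ) : T1)) (x - ((1 / 4 : ℝ) : T1))

lemma norm_coe_eq_abs {r : ℝ} (hr : |r| ≤ 1 / 2) : ‖(r : T1)‖ = |r| :=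
  (AddCircle.norm_coe_eq_abs_iff 1 one_ne_zero).2 (by rwa [abs_one])

lemma exists_coe_eq_abs_eq_norm (y : T1) : ∃ r : ℝ, (r : T1) = y ∧ |r| = ‖y‖ := by
  obtain ⟨r, rfl⟩ := QuotientAddGroup.mk_surjective y
  refine ⟨r - round r, ?_, UnitAddCircle.norm_eq.symm⟩
  rw [AddCircle.coe_sub, sub_eq_self, AddCircle.coe_eq_zero_iff]
  exact ⟨round r, by simp⟩

lemma triangleWave_coe {r : ℝ} (hr : |r| ≤ 1 / 4) : triangleWave (r : T1) = r := by
  obtain ⟨hr₀, hr₁⟩ := abs_le.1 hr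
  rw [triangleWave, ← AddCircle.coe_sub,
    norm_coe_eq_abs (abs_le.2 ⟨by linarith, by linarith⟩), abs_of_nonpos (by linarith)]
  ring

lemma triangleWave_zero : triangleWave 0 = 0 :=
  triangleWave_coe (r := 0) (by norm_num)

lemma abs_triangleWave_le (y : T1) : |triangleWave y| ≤ ‖y‖ := by
  simpa [triangleWave_zero] using abs_triangleWave_sub_le y 0

variable {Θ : Type*} [NormedAddCommGroup Θ]

/-- `u` is an admissible value at `z` of the function `(θ, y) ↦ y / max |θ| |y|` blowing up the
origin, where `triangleWave` replaces the numerator to make it periodic: every `u ∈ [-1, 1]` is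
admissible at `z = 0`, and a single value is at any other point. -/
def IsBlowUpCoord (z : Θ × T1) (u : ℝ) : Prop := |u| ≤ 1 ∧ u * ‖z‖ = triangleWave z.2

/-- The admissible value away from the origin, with the junk value `0` at the origin. -/
def blowUpCoord (z : Θ × T1) : ℝ := triangleWave z.2 / ‖z‖

lemma isBlowUpCoord_zero_iff {u : ℝ} : IsBlowUpCoord (0 : Θ × T1) u ↔ |u| ≤ 1 := by
  simp [IsBlowUpCoord, triangleWave_zero]

lemma isBlowUpCoord_blowUpCoord (z : Θ × T1) : IsBlowUpCoord z (blowUpCoord z) := by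
  have hle : |triangleWave z.2| ≤ ‖z‖ := (abs_triangleWave_le z.2).trans (norm_snd_le z)
  refine ⟨?_, div_mul_cancel_of_imp fun hz => ?_⟩
  · rw [blowUpCoord, abs_div, abs_norm]
    exact div_le_one_of_le₀ hle (norm_nonneg z)
  · exact abs_nonpos_iff.1 (hle.trans_eq hz)

lemma IsBlowUpCoord.eq_blowUpCoord {z : Θ × T1} {u : ℝ} (hu : IsBlowUpCoord z u) (hz : z ≠ 0) :
    u = blowUpCoord z :=
  (eq_div_iff (norm_ne_zero_iff.2 hz)).2 hu.2

lemma continuousAt_blowUpCoord {z : Θ × T1} (hz : z ≠ 0) : ContinuousAt blowUpCoord z :=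
  (continuous_triangleWave.comp continuous_snd).continuousAt.div continuous_norm.continuousAt
    (norm_ne_zero_iff.2 hz)

lemma isClosed_isBlowUpCoord : IsClosed {p : (Θ × T1) × ℝ | IsBlowUpCoord p.1 p.2} :=
  (isClosed_le (continuous_abs.comp continuous_snd) continuous_const).inter <|
    isClosed_eq (continuous_snd.mul (continuous_norm.comp continuous_fst))
      (continuous_triangleWave.comp (continuous_snd.comp continuous_fst))

lemma IsBlowUpCoord.abs_sub_mul_norm_le {z z' : Θ × T1} {u v : ℝ} (hu : IsBlowUpCoord z u)
    (hv : IsBlowUpCoord z' v) : |u - v| * ‖z‖ ≤ 2 * ‖z - z'‖ := by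
  have hwave : |triangleWave z.2 - triangleWave z'.2| ≤ ‖z - z'‖ :=
    (abs_triangleWave_sub_le _ _).trans (norm_snd_le (z - z'))
  have hnorm : |v * (‖z'‖ - ‖z‖)| ≤ ‖z - z'‖ := by
    rw [abs_mul, norm_sub_rev z z']
    exact (mul_le_of_le_one_left (abs_nonneg _) hv.1).trans (abs_norm_sub_norm_le z' z)
  calc |u - v| * ‖z‖ = |(u - v) * ‖z‖| := by rw [abs_mul, abs_norm]
    _ = |(triangleWave z.2 - triangleWave z'.2) + v * (‖z'‖ - ‖z‖)| := by
        rw [← hu.2, ← hv.2]; ring_nf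
    _ ≤ 2 * ‖z - z'‖ := by rw [two_mul]; exact (abs_add_le _ _).trans (add_le_add hwave hnorm)

lemma IsBlowUpCoord.le_of_near_zero {θ : Θ} {r s u v : ℝ} (hu : IsBlowUpCoord (θ, (r : T1)) u)
    (hv : IsBlowUpCoord (θ, (s : T1)) v) (hrs : r < s) (hr : |r| ≤ 1 / 4) (hs : |s| ≤ 1 / 4) :
    u ≤ v := by
  obtain ⟨hu, hur⟩ := hu
  obtain ⟨hv, hvs⟩ := hv
  rw [Prod.norm_mk, norm_coe_eq_abs (by linarith), triangleWave_coe hr] at hur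
  rw [Prod.norm_mk, norm_coe_eq_abs (by linarith), triangleWave_coe hs] at hvs
  exact le_of_mul_max_abs_eq hrs hu hv hur hvs

/-- Near the origin the coordinate increases along vertical lines; elsewhere it is
`8`-Lipschitz. -/
lemma IsBlowUpCoord.sub_le {θ : Θ} {y : T1} {d u v : ℝ} (hu : IsBlowUpCoord (θ, y) u)
    (hv : IsBlowUpCoord (θ, y + (d : T1)) v) (hd : 0 < d) : u - v ≤ 8 * d := by
  have hdist : ‖((θ, y) : Θ × T1) - (θ, y + (d : T1))‖ ≤ d := by
    have hnorm : ‖(d : T1)‖ ≤ |d| := QuotientAddGroup.norm_mk_le_norm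
    simpa [Prod.norm_mk, abs_of_pos hd, hd.le] using hnorm
  rcases le_or_gt (1 / 4) ‖((θ, y) : Θ × T1)‖ with hz | hz
  · nlinarith [hu.abs_sub_mul_norm_le hv, le_abs_self (u - v), abs_nonneg (u - v)]
  rcases le_or_gt (1 / 4) ‖((θ, y + (d : T1)) : Θ × T1)‖ with hz' | hz'
  · have hlip := hv.abs_sub_mul_norm_le hu
    rw [abs_sub_comm, norm_sub_rev] at hlip
    nlinarith [le_abs_self (u - v), abs_nonneg (u - v)]
  rcases le_or_gt (1 / 4) d with hd' | hd'
  · linarith [(abs_le.1 hu.1).2, (abs_le.1 hv.1).1]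
  obtain ⟨r, rfl, hry⟩ := exists_coe_eq_abs_eq_norm y
  rw [← AddCircle.coe_add] at hv hz'
  have hr : |r| < 1 / 4 := hry.trans_lt ((norm_snd_le ((θ, (r : T1)) : Θ × T1)).trans_lt hz)
  have hs : |r + d| < 1 / 4 := by
    rw [← norm_coe_eq_abs ((abs_add_le r d).trans (by rw [abs_of_pos hd]; linarith))]
    exact (norm_snd_le ((θ, ((r + d : ℝ) : T1)) : Θ × T1)).trans_lt hz'
  linarith [hu.le_of_near_zero hv (lt_add_of_pos_right r hd) hr.le hs.le]

end BlowUpCoordinate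

section WeightedSum

/-- Weights for the heights of the segments: the total height `2 * ∑' n, a n` is small against
the slope in `IsBlowUpCoord.sub_le`. -/
structure IsWeight (a : ℤ → ℝ) : Prop where
  pos (n : ℤ) : 0 < a n
  summable : Summable a
  tsum_lt : ∑' n, a n < 1 / 8

lemma exists_isWeight : ∃ a : ℤ → ℝ, IsWeight a := by
  obtain ⟨a, hpos, c, hc, hlt⟩ := posSumOfEncodable (show (0 : ℝ) < 1 / 16 by norm_num) ℤ
  exact ⟨a, hpos, hc.summable, by rw [hc.tsum_eq]; linarith⟩

variable {a u v : ℤ → ℝ}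

namespace IsWeight

lemma lt_one_eighth (ha : IsWeight a) (n : ℤ) : a n < 1 / 8 :=
  (ha.summable.le_tsum n fun k _ => (ha.pos k).le).trans_lt ha.tsum_lt

lemma norm_mul_le (ha : IsWeight a) {x : ℝ} (hx : |x| ≤ 1) (n : ℤ) : ‖a n * x‖ ≤ a n := by
  rw [norm_mul, Real.norm_of_nonneg (ha.pos n).le]
  exact mul_le_of_le_one_right (ha.pos n).le hx

lemma summable_mul (ha : IsWeight a) (hu : ∀ n, |u n| ≤ 1) : Summable fun n => a n * u n :=
  ha.summable.of_norm_bounded fun n => ha.norm_mul_le (hu n) n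

lemma abs_tsum_mul_le (ha : IsWeight a) (hu : ∀ n, |u n| ≤ 1) :
    |∑' n, a n * u n| ≤ ∑' n, a n :=
  tsum_of_norm_bounded ha.summable.hasSum fun n => ha.norm_mul_le (hu n) n

lemma continuous_tsum_mul {X : Type*} [TopologicalSpace X] (ha : IsWeight a) {u : X → ℤ → ℝ}
    (hc : ∀ n, Continuous fun x => u x n) (hu : ∀ x n, |u x n| ≤ 1) :
    Continuous fun x => ∑' n, a n * u x n :=
  continuous_tsum (fun n => continuous_const.mul (hc n)) ha.summable
    fun n x => ha.norm_mul_le (hu x n) n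

lemma tsum_mul_sub_lt (ha : IsWeight a) (hu : ∀ n, |u n| ≤ 1) (hv : ∀ n, |v n| ≤ 1) {d : ℝ}
    (hd : 0 < d) (huv : ∀ n, u n - v n ≤ 8 * d) : ∑' n, a n * u n - ∑' n, a n * v n < d := by
  calc ∑' n, a n * u n - ∑' n, a n * v n = ∑' n, (a n * u n - a n * v n) :=
        ((ha.summable_mul hu).tsum_sub (ha.summable_mul hv)).symm
    _ ≤ ∑' n, a n * (8 * d) := by
        refine ((ha.summable_mul hu).sub (ha.summable_mul hv)).tsum_le_tsum (fun n => ?_)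
          (ha.summable.mul_right _)
        rw [← mul_sub]
        exact mul_le_mul_of_nonneg_left (huv n) (ha.pos n).le
    _ = (∑' n, a n) * (8 * d) := tsum_mul_right
    _ < d := by nlinarith [ha.tsum_lt]

lemma tsum_mul_sub_eq (ha : IsWeight a) (hu : ∀ n, |u n| ≤ 1) (hv : ∀ n, |v n| ≤ 1) {m : ℤ}
    (huv : ∀ n, n ≠ m → u n = v n) :
    ∑' n, a n * u n - ∑' n, a n * v n = a m * (u m - v m) := by
  rw [← (ha.summable_mul hu).tsum_sub (ha.summable_mul hv), mul_sub]
  exact tsum_eq_single m fun n hn => by rw [huv n hn, sub_self]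

end IsWeight

end WeightedSum

section OrbitBlowUp

variable {Θ : Type*} [NormedAddCommGroup Θ]

/-- The space `Θ × T1` with the orbit of the origin under translation by `g` blown up to segments:
the coordinate `p.2 n` resolves the point `n • g`. -/
def orbitBlowUp (g : Θ × T1) : Set ((Θ × T1) × (ℤ → ℝ)) :=
  {p | ∀ n, IsBlowUpCoord (p.1 - n • g) (p.2 n)}

/-- The lift of translation by `g` to the blow-up. -/
def orbitBlowUpShift (g : Θ × T1) : orbitBlowUp g ≃ₜ orbitBlowUp g where
  toFun p := ⟨(p.1.1 + g, fun n => p.1.2 (n - 1)), fun n => by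
    simpa [sub_smul, sub_sub_eq_add_sub, sub_add_eq_add_sub] using p.2 (n - 1)⟩
  invFun p := ⟨(p.1.1 - g, fun n => p.1.2 (n + 1)), fun n => by
    simpa [add_smul, sub_sub, add_comm] using p.2 (n + 1)⟩
  left_inv p := by simp
  right_inv p := by simp
  continuous_toFun := by fun_prop
  continuous_invFun := by fun_prop

variable {g : Θ × T1}

instance [CompactSpace Θ] : CompactSpace (orbitBlowUp g) := by
  have hcompact : IsCompact ((univ : Set (Θ × T1)) ×ˢ univ.pi fun _ : ℤ => Icc (-1 : ℝ) 1) :=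
    isCompact_univ.prod (isCompact_univ_pi fun _ => isCompact_Icc)
  have hclosed : IsClosed (orbitBlowUp g) := by
    simp only [orbitBlowUp, ofPred_forall]
    exact isClosed_iInter fun n => isClosed_isBlowUpCoord.preimage
      (f := fun p : (Θ × T1) × (ℤ → ℝ) => (p.1 - n • g, p.2 n)) (by fun_prop)
  exact isCompact_iff_compactSpace.1 <| hcompact.of_isClosed_subset hclosed
    fun p hp => ⟨mem_univ _, fun n _ => abs_le.1 (hp n).1⟩

/-- The lift of a point to the blow-up, with coordinate `0` on the segment over an orbit point. -/
def orbitLift (g z : Θ × T1) : orbitBlowUp g :=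
  ⟨(z, fun n => blowUpCoord (z - n • g)), fun _ => isBlowUpCoord_blowUpCoord _⟩

lemma abs_coord_le (p : orbitBlowUp g) (n : ℤ) : |p.1.2 n| ≤ 1 := (p.2 n).1

lemma coord_eq_of_base_eq {p q : orbitBlowUp g} (hpq : p.1.1 = q.1.1) {n : ℤ}
    (hn : p.1.1 ≠ n • g) : p.1.2 n = q.1.2 n := by
  rw [(p.2 n).eq_blowUpCoord (sub_ne_zero.2 hn),
    (q.2 n).eq_blowUpCoord (sub_ne_zero.2 (hpq ▸ hn)), hpq]

/-- The embedding of the blow-up into `Θ × T1` which gives the `n`-th segment the height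
`2 * a n`. -/
def flatten (a : ℤ → ℝ) (p : orbitBlowUp g) : Θ × T1 :=
  (p.1.1.1, p.1.1.2 + ((∑' n, a n * p.1.2 n : ℝ) : T1))

variable {a : ℤ → ℝ}

lemma continuous_flatten (ha : IsWeight a) : Continuous (flatten a : orbitBlowUp g → Θ × T1) := by
  have hsum : Continuous fun p : orbitBlowUp g => ∑' n, a n * p.1.2 n :=
    ha.continuous_tsum_mul (fun n => by fun_prop) abs_coord_le
  exact (by fun_prop : Continuous fun p : orbitBlowUp g => p.1.1.1).prodMk
    ((by fun_prop : Continuous fun p : orbitBlowUp g => p.1.1.2).add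
      ((AddCircle.continuous_mk' 1).comp hsum))

lemma tsum_coord_sub_lt (ha : IsWeight a) {p q : orbitBlowUp g} {d : ℝ} (hd : 0 < d)
    (hbase : q.1.1 = (p.1.1.1, p.1.1.2 + (d : T1))) :
    ∑' n, a n * p.1.2 n - ∑' n, a n * q.1.2 n < d := by
  refine ha.tsum_mul_sub_lt (abs_coord_le p) (abs_coord_le q) hd fun n => ?_
  have hq := q.2 n
  rw [hbase] at hq
  refine (p.2 n).sub_le (θ := p.1.1.1 - (n • g).1) (y := p.1.1.2 - (n • g).2) ?_ hd
  convert hq using 1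
  exact Prod.ext rfl (sub_add_eq_add_sub _ _ _)

lemma base_eq_and_tsum_coord_eq_of_flatten_eq (ha : IsWeight a) {p q : orbitBlowUp g}
    (hpq : flatten a p = flatten a q) :
    p.1.1 = q.1.1 ∧ ∑' n, a n * p.1.2 n = ∑' n, a n * q.1.2 n := by
  set d := ∑' n, a n * p.1.2 n - ∑' n, a n * q.1.2 n with hd
  have hfst : q.1.1.1 = p.1.1.1 := (Prod.ext_iff.1 hpq).1.symm
  have hsnd : q.1.1.2 = p.1.1.2 + (d : T1) := by
    rw [hd, AddCircle.coe_sub, ← add_sub_assoc, eq_sub_iff_add_eq]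
    exact (Prod.ext_iff.1 hpq).2.symm
  rcases lt_trichotomy d 0 with hneg | hzero | hpos
  · have hbase : p.1.1 = (q.1.1.1, q.1.1.2 + ((-d : ℝ) : T1)) := by
      rw [hfst, hsnd, AddCircle.coe_neg, add_neg_cancel_right]
    have hlt := tsum_coord_sub_lt ha (neg_pos.2 hneg) hbase
    rw [← neg_sub, ← hd] at hlt
    exact absurd hlt (lt_irrefl _)
  · rw [hzero, AddCircle.coe_zero, add_zero] at hsnd
    exact ⟨(Prod.ext hfst hsnd).symm, sub_eq_zero.1 hzero⟩
  · exact absurd (tsum_coord_sub_lt ha hpos (Prod.ext hfst hsnd)) (lt_irrefl d)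

lemma tsum_coord_sub_eq (ha : IsWeight a) (hg : Injective fun n : ℤ => n • g)
    {p q : orbitBlowUp g} {m : ℤ} (hp : p.1.1 = m • g) (hq : q.1.1 = m • g) :
    ∑' n, a n * p.1.2 n - ∑' n, a n * q.1.2 n = a m * (p.1.2 m - q.1.2 m) :=
  ha.tsum_mul_sub_eq (abs_coord_le p) (abs_coord_le q) fun _ hn =>
    coord_eq_of_base_eq (hp.trans hq.symm) (hp ▸ hg.ne hn.symm)

lemma exists_flatten_eq_add_mul (ha : IsWeight a) (hg : Injective fun n : ℤ => n • g) (m : ℤ) :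
    ∃ c : ℝ, ∀ p : orbitBlowUp g, p.1.1 = m • g →
      flatten a p = (m • g.1, ((c + a m * p.1.2 m : ℝ) : T1)) := by
  set p₀ := orbitLift g (m • g)
  obtain ⟨y, hy⟩ := QuotientAddGroup.mk_surjective (m • g).2
  refine ⟨y + ∑' n, a n * p₀.1.2 n, fun p hp => ?_⟩
  have hsum := tsum_coord_sub_eq ha hg hp (q := p₀) rfl
  have hp₀ : p₀.1.2 m = 0 := by simp [p₀, orbitLift, blowUpCoord]
  rw [hp₀, sub_zero, sub_eq_iff_eq_add'] at hsum
  rw [flatten, hp, hsum, ← hy, add_assoc, AddCircle.coe_add]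
  rfl

lemma exists_base_eq_coord_eq (g : Θ × T1) (m : ℤ) {u : ℝ} (hu : |u| ≤ 1) :
    ∃ p : orbitBlowUp g, p.1.1 = m • g ∧ p.1.2 m = u := by
  refine ⟨⟨(m • g, update (orbitLift g (m • g)).1.2 m u), fun n => ?_⟩, rfl, update_self ..⟩
  rcases eq_or_ne n m with rfl | hn
  · simpa using isBlowUpCoord_zero_iff.2 hu
  · simpa [hn, orbitLift] using (orbitLift g (m • g)).2 n

lemma injective_flatten (ha : IsWeight a) (hg : Injective fun n : ℤ => n • g) :
    Injective (flatten a : orbitBlowUp g → Θ × T1) := by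
  intro p q hpq
  obtain ⟨hbase, hsum⟩ := base_eq_and_tsum_coord_eq_of_flatten_eq ha hpq
  refine Subtype.ext (Prod.ext hbase (funext fun m => ?_))
  by_cases hm : p.1.1 = m • g
  · have hmul := tsum_coord_sub_eq ha hg hm (hbase ▸ hm)
    rw [hsum, sub_self, eq_comm, mul_eq_zero, sub_eq_zero] at hmul
    exact hmul.resolve_left (ha.pos m).ne'
  · exact coord_eq_of_base_eq hbase hm

lemma surjective_id_add_of_abs_le {φ : ℝ → ℝ} (hφ : Continuous φ) {C : ℝ} (hC : ∀ y, |φ y| ≤ C) :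
    Surjective fun y => y + φ y :=
  (continuous_id.add hφ).surjective
    (Filter.tendsto_atTop_add_right_of_le' _ (-C) Filter.tendsto_id
      (.of_forall fun y => (abs_le.1 (hC y)).1))
    (Filter.tendsto_atBot_add_right_of_ge' _ C Filter.tendsto_id
      (.of_forall fun y => (abs_le.1 (hC y)).2))

lemma mem_range_flatten (ha : IsWeight a) {z : Θ × T1} (hz : z.1 ∉ range fun n : ℤ => n • g.1) :
    z ∈ range (flatten a : orbitBlowUp g → Θ × T1) := by
  obtain ⟨θ, x⟩ := z
  obtain ⟨X, rfl⟩ := QuotientAddGroup.mk_surjective x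
  have hcont (n : ℤ) : Continuous fun y : ℝ => blowUpCoord ((θ, (y : T1)) - n • g) := by
    refine continuous_iff_continuousAt.2 fun y => ContinuousAt.comp (g := blowUpCoord)
      (continuousAt_blowUpCoord fun h => hz ⟨n, ?_⟩) ?_
    · exact (sub_eq_zero.1 (congrArg Prod.fst h)).symm
    · have hcoe := (AddCircle.continuous_mk' (1 : ℝ)).continuousAt (x := y)
      exact (continuousAt_const.prodMk hcoe).sub continuousAt_const
  have hle (y : ℝ) (n : ℤ) : |blowUpCoord ((θ, (y : T1)) - n • g)| ≤ 1 :=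
    (isBlowUpCoord_blowUpCoord _).1
  obtain ⟨y, hy⟩ := surjective_id_add_of_abs_le (ha.continuous_tsum_mul hcont hle)
    (fun y => ha.abs_tsum_mul_le (hle y)) X
  exact ⟨orbitLift g (θ, (y : T1)), Prod.ext rfl (congrArg ((↑) : ℝ → T1) hy)⟩

variable [CompactSpace Θ] [Infinite Θ]

lemma dense_fst_notMem_range_zsmul :
    Dense {z : Θ × T1 | z.1 ∉ range fun n : ℤ => n • g.1} :=
  (dense_compl_of_countable (countable_range _)).preimage isOpenMap_fst

lemma surjective_flatten (ha : IsWeight a) :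
    Surjective (flatten a : orbitBlowUp g → Θ × T1) := by
  have hdense : DenseRange (flatten a : orbitBlowUp g → Θ × T1) :=
    (dense_fst_notMem_range_zsmul (g := g)).mono fun _ => mem_range_flatten ha
  rw [← range_eq_univ, ← hdense.closure_range]
  exact (isCompact_range (continuous_flatten ha)).isClosed.closure_eq.symm

end OrbitBlowUp

section BlownUpTranslation

variable {Θ : Type*} [NormedAddCommGroup Θ] [CompactSpace Θ] [Infinite Θ] {g : Θ × T1}
  {a : ℤ → ℝ} (hg : DenseRange fun n : ℤ => n • g) (ha : IsWeight a)

/-- The identification of the blow-up with `Θ × T1` by `flatten`. -/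
def flattenHomeo : orbitBlowUp g ≃ₜ Θ × T1 :=
  (continuous_flatten ha).homeoOfEquivCompactToT2 (f := .ofBijective (flatten a)
    ⟨injective_flatten ha (injective_zsmul_of_denseRange hg), surjective_flatten ha⟩)

/-- Translation by `g` with the orbit of the origin blown up to segments, as a homeomorphism of
`Θ × T1`. -/
def blownUpTranslation : Θ × T1 ≃ₜ Θ × T1 :=
  (flattenHomeo hg ha).symm.trans ((orbitBlowUpShift g).trans (flattenHomeo hg ha))

/-- The semiconjugacy from `blownUpTranslation` to translation by `g`, collapsing the segments. -/
def collapse (z : Θ × T1) : Θ × T1 := ((flattenHomeo hg ha).symm z).1.1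

lemma continuous_collapse : Continuous (collapse hg ha) :=
  continuous_fst.comp (continuous_subtype_val.comp (flattenHomeo hg ha).symm.continuous)

lemma collapse_flatten (p : orbitBlowUp g) : collapse hg ha (flatten a p) = p.1.1 :=
  congrArg (fun q : orbitBlowUp g => q.1.1) ((flattenHomeo hg ha).symm_apply_apply p)

lemma surjective_collapse : Surjective (collapse hg ha) := fun z =>
  ⟨flatten a (orbitLift g z), collapse_flatten hg ha _⟩

lemma collapse_fst (z : Θ × T1) : (collapse hg ha z).1 = z.1 := by
  obtain ⟨p, rfl⟩ := surjective_flatten ha (g := g) z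
  rw [collapse_flatten]
  rfl

lemma collapse_blownUpTranslation (z : Θ × T1) :
    collapse hg ha (blownUpTranslation hg ha z) = collapse hg ha z + g :=
  collapse_flatten hg ha (orbitBlowUpShift g ((flattenHomeo hg ha).symm z))

lemma isFactorMap_collapse :
    IsFactorMap (blownUpTranslation hg ha) (· + g) (collapse hg ha) :=
  ⟨continuous_collapse hg ha, surjective_collapse hg ha,
    funext (collapse_blownUpTranslation hg ha)⟩

/-- The segment collapsed to the point `n • g`. -/
def orbitSegment (n : ℤ) : Set (Θ × T1) := collapse hg ha ⁻¹' {n • g}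

lemma exists_orbitSegment_eq (m : ℤ) : ∃ c : ℝ, orbitSegment hg ha m =
    {m • g.1} ×ˢ ((fun t : ℝ => (t : T1)) '' Icc (c - a m) (c + a m)) := by
  obtain ⟨c, hc⟩ := exists_flatten_eq_add_mul ha (injective_zsmul_of_denseRange hg) m
  have ham := ha.pos m
  refine ⟨c, ext fun z => ⟨fun hz => ?_, ?_⟩⟩
  · obtain ⟨p, rfl⟩ := surjective_flatten ha (g := g) z
    rw [hc p ((collapse_flatten hg ha p).symm.trans hz)]
    obtain ⟨hle, hge⟩ := abs_le.1 (abs_coord_le p m)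
    exact ⟨rfl, _, ⟨by nlinarith, by nlinarith⟩, rfl⟩
  · obtain ⟨θ, x⟩ := z
    rintro ⟨rfl, t, ⟨htl, htr⟩, rfl⟩
    have hu : |(t - c) / a m| ≤ 1 := by
      rw [abs_div, abs_of_pos ham]
      exact div_le_one_of_le₀ (abs_le.2 ⟨by linarith, by linarith⟩) ham.le
    obtain ⟨p, hp, hpu⟩ := exists_base_eq_coord_eq g m hu
    have hflat := hc p hp
    rw [hpu, mul_div_cancel₀ _ ham.ne', add_sub_cancel] at hflat
    exact (congrArg (collapse hg ha) hflat.symm).trans ((collapse_flatten hg ha p).trans hp)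

lemma dist_le_of_mem_orbitSegment {n : ℤ} {z z' : Θ × T1} (hz : z ∈ orbitSegment hg ha n)
    (hz' : z' ∈ orbitSegment hg ha n) : dist z z' ≤ 2 * a n := by
  obtain ⟨c, hc⟩ := exists_orbitSegment_eq hg ha n
  obtain ⟨θ, x⟩ := z
  obtain ⟨θ', x'⟩ := z'
  rw [hc] at hz hz'
  obtain ⟨rfl, t, ht, rfl⟩ := hz
  obtain ⟨rfl, t', ht', rfl⟩ := hz'
  calc dist _ _ = ‖((t - t' : ℝ) : T1)‖ := by simp [dist_eq_norm]
    _ ≤ |t - t'| := QuotientAddGroup.norm_mk_le_norm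
    _ ≤ c + a n - (c - a n) := abs_sub_le_of_le_of_le ht.1 ht.2 ht'.1 ht'.2
    _ = 2 * a n := by ring

lemma zIter_mem_orbitSegment {m : ℤ} {z : Θ × T1} (hz : z ∈ orbitSegment hg ha m) (n : ℤ) :
    zIter (blownUpTranslation hg ha).toEquiv n z ∈ orbitSegment hg ha (m + n) := by
  have hmap := map_zIter (f := (blownUpTranslation hg ha).toEquiv)
    (collapse_blownUpTranslation hg ha) n z
  rwa [show collapse hg ha z = m • g from hz, ← add_zsmul] at hmap

lemma coe_ne_coe_of_lt_of_lt_add_one {s t : ℝ} (hst : s < t) (hts : t < s + 1) :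
    (t : T1) ≠ (s : T1) := fun h =>
  hst.ne' <| (AddCircle.coe_eq_coe_iff_of_mem_Ico ⟨hst.le, hts⟩
    ⟨le_rfl, lt_add_one s⟩).1 h

lemma orbitSegment_nontrivial (n : ℤ) : (orbitSegment hg ha n).Nontrivial := by
  obtain ⟨c, hc⟩ := exists_orbitSegment_eq hg ha n
  have hpos := ha.pos n
  have hlt := ha.lt_one_eighth n
  rw [hc]
  refine ⟨(_, ((c + a n : ℝ) : T1)), ⟨rfl, _, ⟨by linarith, le_rfl⟩, rfl⟩,
    (_, ((c - a n : ℝ) : T1)), ⟨rfl, _, ⟨le_rfl, by linarith⟩, rfl⟩, fun h => ?_⟩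
  exact coe_ne_coe_of_lt_of_lt_add_one (by linarith) (by linarith) (congrArg Prod.snd h)

lemma not_isDistalPt_of_mem_orbitSegment {m : ℤ} {z : Θ × T1}
    (hz : z ∈ orbitSegment hg ha m) : ¬IsDistalPt (blownUpTranslation hg ha).toEquiv z := by
  obtain ⟨z', hz', hne⟩ := (orbitSegment_nontrivial hg ha m).exists_ne z
  refine not_isDistalPt_of_tendsto hne (l := .cofinite) ?_
  have hlim : Filter.Tendsto (fun n => 2 * a (m + n)) .cofinite (nhds 0) := by
    simpa using (ha.summable.tendsto_cofinite_zero.comp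
      (add_right_injective m).tendsto_cofinite).const_mul 2
  exact squeeze_zero (fun _ => dist_nonneg) (fun n => dist_le_of_mem_orbitSegment hg ha
    (zIter_mem_orbitSegment hg ha hz n) (zIter_mem_orbitSegment hg ha hz' n)) hlim

lemma eq_of_collapse_eq {z z' : Θ × T1} (hzz' : collapse hg ha z' = collapse hg ha z)
    (hz : z ∉ ⋃ n, orbitSegment hg ha n) : z' = z :=
  (flattenHomeo hg ha).symm.injective <| Subtype.ext <| Prod.ext hzz' <| funext fun n =>
    coord_eq_of_base_eq hzz' fun hn => hz (mem_iUnion.2 ⟨n, hzz'.symm.trans hn⟩)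

lemma setOf_not_isDistalPt : {z | ¬IsDistalPt (blownUpTranslation hg ha).toEquiv z} =
    ⋃ n, orbitSegment hg ha n := by
  ext z
  refine ⟨fun hz => by_contra fun hmem => hz ?_, fun hz => ?_⟩
  · exact isDistalPt_of_injectivity_point (continuous_collapse hg ha)
      (collapse_blownUpTranslation hg ha) fun _ h => eq_of_collapse_eq hg ha h hmem
  · obtain ⟨n, hn⟩ := mem_iUnion.1 hz
    exact not_isDistalPt_of_mem_orbitSegment hg ha hn

lemma notMem_iUnion_orbitSegment {z : Θ × T1} (hz : z.1 ∉ range fun n : ℤ => n • g.1) :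
    z ∉ ⋃ n, orbitSegment hg ha n := fun hmem => by
  obtain ⟨n, hn⟩ := mem_iUnion.1 hmem
  exact hz ⟨n, ((collapse_fst hg ha z).symm.trans (congrArg Prod.fst hn)).symm⟩

lemma dense_compl_iUnion_orbitSegment : Dense (⋃ n, orbitSegment hg ha n)ᶜ :=
  dense_fst_notMem_range_zsmul.mono fun _ => notMem_iUnion_orbitSegment hg ha

lemma dense_range_zIter_blownUpTranslation (z : Θ × T1) :
    Dense (range fun n : ℤ => zIter (blownUpTranslation hg ha).toEquiv n z) :=
  dense_range_zIter_of_dense_injectivity_points (continuous_collapse hg ha)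
    (collapse_blownUpTranslation hg ha) hg
    ((dense_compl_iUnion_orbitSegment hg ha).mono fun _ hz _ h => eq_of_collapse_eq hg ha h hz) z

lemma almostOneOne_collapse : AlmostOneOne (collapse hg ha) := by
  refine (dense_fst_notMem_range_zsmul (g := g)).mono fun y hy => ?_
  obtain ⟨z, rfl⟩ := surjective_collapse hg ha y
  rw [mem_ofPred_eq, collapse_fst] at hy
  exact ⟨z, rfl, fun _ h => eq_of_collapse_eq hg ha h (notMem_iUnion_orbitSegment hg ha hy)⟩

end BlownUpTranslation

theorem stmt3_general {Θ : Type} [NormedAddCommGroup Θ] [CompactSpace Θ] [Infinite Θ] {ω : Θ}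
    {ρ : T1} (hd : DenseRange fun n : ℤ => n • (ω, ρ)) :
    ∃ f : (Θ × T1) ≃ₜ (Θ × T1),
      (∀ z : Θ × T1, Dense (range fun n : ℤ => zIter f.toEquiv n z)) ∧
      (∃ z : Θ × T1, IsDistalPt f.toEquiv z) ∧
      ¬ (∀ z : Θ × T1, IsDistalPt f.toEquiv z) ∧
      Nonempty (AAWitness (⇑f)) ∧
      (∀ p : Θ × T1, (f p).1 = p.1 + ω) ∧
      ∃ h : Θ × T1 → Θ × T1,
        IsFactorMap (⇑f) (fun p : Θ × T1 => (p.1 + ω, p.2 + ρ)) h ∧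
        ∃ (z₀ : Θ × T1) (J : ℤ → Set (Θ × T1)),
          (∀ n : ℤ, ∃ (θ : Θ) (a b : ℝ), a < b ∧ b < a + 1 ∧
            J n = {θ} ×ˢ ((fun t : ℝ => ((t : ℝ) : T1)) '' Set.Icc a b)) ∧
          (∀ n : ℤ, h '' J n = {(z₀.1 + n • ω, z₀.2 + n • ρ)}) ∧
          Set.InjOn h (⋃ n : ℤ, J n)ᶜ ∧
          {z : Θ × T1 | ¬ IsDistalPt f.toEquiv z} = ⋃ n : ℤ, J n := by
  obtain ⟨a, ha⟩ := exists_isWeight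
  have hset := setOf_not_isDistalPt hd ha
  refine ⟨blownUpTranslation hd ha, dense_range_zIter_blownUpTranslation hd ha, ?_, ?_,
    (isFactorMap_collapse hd ha).nonempty_aaWitness (almostOneOne_collapse hd ha), fun p => ?_,
    collapse hd ha, isFactorMap_collapse hd ha, 0, orbitSegment hd ha, fun n => ?_, fun n => ?_,
    fun z hz z' _ h => (eq_of_collapse_eq hd ha h.symm hz).symm, hset⟩
  · obtain ⟨z, hz⟩ := (dense_compl_iUnion_orbitSegment hd ha).nonempty
    exact ⟨z, not_not.1 fun h => hz (hset ▸ h)⟩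
  · obtain ⟨z, hz⟩ := (orbitSegment_nontrivial hd ha 0).nonempty
    exact fun h => not_isDistalPt_of_mem_orbitSegment hd ha hz (h z)
  · rw [← collapse_fst hd ha, collapse_blownUpTranslation, Prod.fst_add, collapse_fst]
  · obtain ⟨c, hc⟩ := exists_orbitSegment_eq hd ha n
    exact ⟨_, _, _, by linarith [ha.pos n], by linarith [ha.lt_one_eighth n], hc⟩
  · rw [orbitSegment, image_preimage_eq _ (surjective_collapse hd ha)]
    simp

/-- Rees: a point-distal, non-distal, almost automorphic minimal
homeomorphism of the two-torus, of skew product form over an irrational rotation,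
semiconjugate to an irrational translation of the torus by a map which is bijective
off a countable union of vertical segments, which form exactly the set of
non-distal points. -/
theorem stmt3 :
    ∃ f : (T1 × T1) ≃ₜ (T1 × T1),
      (∀ z : T1 × T1, Dense (range fun n : ℤ => zIter f.toEquiv n z)) ∧
      (∃ z : T1 × T1, IsDistalPt f.toEquiv z) ∧
      ¬ (∀ z : T1 × T1, IsDistalPt f.toEquiv z) ∧
      Nonempty (AAWitness (⇑f)) ∧
      ∃ ω ρ : ℝ, Irrational ω ∧
        (∀ p : T1 × T1, (f p).1 = p.1 + (ω : T1)) ∧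
        ∃ h : T1 × T1 → T1 × T1,
          IsFactorMap (⇑f) (fun p : T1 × T1 => (p.1 + (ω : T1), p.2 + (ρ : T1))) h ∧
          ∃ (z₀ : T1 × T1) (J : ℤ → Set (T1 × T1)),
            (∀ n : ℤ, ∃ (θ : T1) (a b : ℝ), a < b ∧ b < a + 1 ∧
              J n = {θ} ×ˢ ((fun t : ℝ => ((t : ℝ) : T1)) '' Set.Icc a b)) ∧
            (∀ n : ℤ, h '' J n = {(z₀.1 + n • (ω : T1), z₀.2 + n • (ρ : T1))}) ∧
            Set.InjOn h (⋃ n : ℤ, J n)ᶜ ∧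
            {z : T1 × T1 | ¬ IsDistalPt f.toEquiv z} = ⋃ n : ℤ, J n := by
  obtain ⟨⟨x, y⟩, hd⟩ := exists_denseRange_zsmul_torus
  obtain ⟨ω, rfl⟩ := QuotientAddGroup.mk_surjective x
  obtain ⟨ρ, rfl⟩ := QuotientAddGroup.mk_surjective y
  have hω : DenseRange fun n : ℤ => n • (ω : T1) :=
    Prod.fst_surjective.denseRange.comp hd continuous_fst
  have hirr : Irrational ω := by simpa using AddCircle.denseRange_zsmul_coe_iff.1 hω
  have : Infinite T1 :=
    (AddCircle.equivIco 1 0).infinite_iff.2 (Ico_infinite (by norm_num)).to_subtype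
  obtain ⟨f, hmin, hdist, hndist, haa, hskew, hfactor⟩ := stmt3_general hd
  exact ⟨f, hmin, hdist, hndist, haa, ω, ρ, hirr, hskew, hfactor⟩

end
end
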